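/- arXiv:1101.3948 — 6 statements merged into one kernel-verified Lean document; each statement's English description precedes it below -/
import Mathlib

section
/- Let n, k be positive integers with k ≥ n+1, and let f : ℕ≥1 → ℂ be a function such that the multiple L-value L(𝐤, f, J) = Σ_{m₁,…,mₙ≥1} f(Σ_{j∈J} m_j) / (m₁^{k₁} (m₁+m₂)^{k₂} ⋯ (m₁+⋯+mₙ)^{kₙ}) converges absolutely for every nonempty subset J ⊆ {1,…,n} and every 𝐤 ∈ I(k, max J), and such that Σ_{m≥1} f(m)/m^k converges absolutely. Then the sum formula Σ_{∅≠J⊆{1,…,n}} Σ_{𝐤∈I(k, max J)} (−1)^{|J|−1} L(𝐤, f, J) = Σ_{m=1}^∞ f(m)/m^k holds. -/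
open Finset

/-- `PS p j` is the partial sum `p₁ + ⋯ + p_j` of the positive integers
`pᵢ = p (i-1) + 1` encoded by `p : Fin N → ℕ`. -/
def PS {N : ℕ} (p : Fin N → ℕ) (j : ℕ) : ℕ :=
  ∑ i ∈ Finset.univ.filter (fun i : Fin N => (i : ℕ) < j), (p i + 1)

/-- `Ikr n k r` is the set `I(k,r)` of tuples `(k₁,…,kₙ)` of positive integers with
`kₙ ≥ 2`, `k₁ + ⋯ + kₙ = k` and `k₁ = ⋯ = k_{r-1} = 1`; the tuple is encoded as
`kv : Fin n → ℕ` with `k_j = kv (j-1)`. -/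
def Ikr (n k r : ℕ) : Finset (Fin n → ℕ) :=
  (Fintype.piFinset fun _ : Fin n => Finset.range (k + 1)).filter fun kv =>
    (∀ i, 1 ≤ kv i) ∧ (∀ i : Fin n, (i : ℕ) = n - 1 → 2 ≤ kv i) ∧
      (∑ i, kv i) = k ∧ ∀ i : Fin n, (i : ℕ) + 2 ≤ r → kv i = 1

/-- The multiple `L`-value `L(𝐤, f, J)`, where `mᵢ = mv (i-1) + 1` ranges over
positive integers and `m₁ + ⋯ + m_j = PS mv j`. -/
noncomputable def LVal (n : ℕ) (kv : Fin n → ℕ) (f : ℕ → ℂ) (J : Finset (Fin n)) : ℂ :=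
  ∑' mv : Fin n → ℕ,
    f (∑ j ∈ J, (mv j + 1)) / ∏ i : Fin n, ((PS mv ((i : ℕ) + 1) : ℕ) : ℂ) ^ kv i


lemma sf_hs {ι : Type*} {f g : ι → ℝ} {a b : ℝ} (h : HasSum f a) (hfg : ∀ x, g x = f x)
    (hab : b = a) : HasSum g b := by
  subst hab
  rwa [show g = f from funext hfg]

noncomputable def sfW (N A B : ℕ) : PowerSeries ℝ :=
  if A = N then PowerSeries.mk (fun d => (((A + B : ℕ) : ℝ)⁻¹) ^ (d + 1))
  else PowerSeries.C (((A + B : ℕ) : ℝ)⁻¹)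

noncomputable def sfphi (N A : ℕ) : PowerSeries ℝ := if A = N then PowerSeries.X else 0

noncomputable def sfal (N : ℕ) : ℕ → ℕ → PowerSeries ℝ
  | 0 => fun A => if A = 0 then 1 else 0
  | j + 1 => fun A => - (sfW N A 0 * ∑ A' ∈ range A, sfal N j A')

noncomputable def sfbe : ℕ → ℕ → ℝ
  | 0 => fun B => if B = 0 then 1 else 0
  | j + 1 => fun B => (B : ℝ)⁻¹ * ∑ B' ∈ range B, sfbe j B'

lemma sfW_mul (N A B : ℕ) (h : A + B ≠ 0) :
    sfW N A B * (PowerSeries.C ((A + B : ℕ) : ℝ) - sfphi N A) = 1 := by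
  have h0 : ((A + B : ℕ) : ℝ) ≠ 0 := by exact_mod_cast h
  unfold sfW sfphi
  split_ifs with h1
  · ext d
    rw [mul_sub, map_sub, PowerSeries.coeff_mul_C]
    cases d with
    | zero => simp [h0, -Nat.cast_add]
    | succ d =>
      rw [PowerSeries.coeff_succ_mul_X, PowerSeries.coeff_mk, PowerSeries.coeff_mk,
        PowerSeries.coeff_one, if_neg (by omega), pow_succ _ (d+1), mul_assoc, inv_mul_cancel₀ h0]
      ring
  · rw [sub_zero, ← map_mul, inv_mul_cancel₀ h0, map_one]

lemma sfal_mul (N A j : ℕ) :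
    (PowerSeries.C (A : ℝ) - sfphi N A) * sfal N (j + 1) A = - ∑ A' ∈ range A, sfal N j A' := by
  rcases Nat.eq_zero_or_pos A with rfl | hA
  · simp [sfal]
  · have h := sfW_mul N A 0 (by omega)
    rw [add_zero] at h
    simp only [sfal]
    rw [mul_neg, ← mul_assoc, mul_comm _ (sfW N A 0), h, one_mul]

lemma sfal_zero_mul (N A : ℕ) (hN : 1 ≤ N) :
    (PowerSeries.C (A : ℝ) - sfphi N A) * sfal N 0 A = 0 := by
  rcases Nat.eq_zero_or_pos A with rfl | hA
  · have : ¬ (0 = N) := by omega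
    simp [sfal, sfphi, this]
  · have : ¬ (A = 0) := by omega
    simp [sfal, this]

lemma sfbe_mul (B j : ℕ) : (B : ℝ) * sfbe (j + 1) B = ∑ B' ∈ range B, sfbe j B' := by
  rcases Nat.eq_zero_or_pos B with rfl | hA
  · simp
  · have : (B : ℝ) ≠ 0 := by positivity
    simp only [sfbe]
    field_simp

lemma sfbe_zero_mul (B : ℕ) : (B : ℝ) * sfbe 0 B = 0 := by
  by_cases h : B = 0 <;> simp [sfbe, h]

lemma sfbe_nonneg (j B : ℕ) : 0 ≤ sfbe j B := by
  induction j generalizing B with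
  | zero => simp only [sfbe]; split_ifs <;> norm_num
  | succ j ih =>
    simp only [sfbe]
    exact mul_nonneg (by positivity) (Finset.sum_nonneg fun i _ => ih i)

/-- the convolution step -/
lemma sf_conv (n N A B : ℕ) (hN : 1 ≤ N) :
    sfW N A B * (- ∑ A' ∈ range A, ∑ x ∈ antidiagonal n, sfal N x.1 A' * PowerSeries.C (sfbe x.2 B)
      + ∑ B' ∈ range B, ∑ x ∈ antidiagonal n, sfal N x.1 A * PowerSeries.C (sfbe x.2 B'))
    = ∑ x ∈ antidiagonal (n + 1), sfal N x.1 A * PowerSeries.C (sfbe x.2 B) := by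
  by_cases hAB : A + B = 0
  · obtain ⟨rfl, rfl⟩ : A = 0 ∧ B = 0 := by omega
    simp only [range_zero, sum_empty, neg_zero, add_zero, mul_zero]
    symm
    apply Finset.sum_eq_zero
    rintro ⟨a, b⟩ h
    rw [HasAntidiagonal.mem_antidiagonal] at h
    simp only at h ⊢
    cases a with
    | zero =>
      cases b with
      | zero => omega
      | succ b => simp [sfbe]
    | succ a => simp [sfal]
  · have e1 : (- ∑ A' ∈ range A, ∑ x ∈ antidiagonal n, sfal N x.1 A' * PowerSeries.C (sfbe x.2 B))
        = (PowerSeries.C (A : ℝ) - sfphi N A) *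
          ∑ x ∈ antidiagonal (n + 1), sfal N x.1 A * PowerSeries.C (sfbe x.2 B) := by
      rw [Finset.Nat.sum_antidiagonal_succ, mul_add, ← mul_assoc, sfal_zero_mul N A hN, zero_mul,
        zero_add, Finset.sum_comm, Finset.mul_sum, ← Finset.sum_neg_distrib]
      refine Finset.sum_congr rfl fun x _ => ?_
      rw [← mul_assoc, sfal_mul N A _, ← Finset.sum_mul, neg_mul]
    have e2 : (∑ B' ∈ range B, ∑ x ∈ antidiagonal n, sfal N x.1 A * PowerSeries.C (sfbe x.2 B'))
        = PowerSeries.C (B : ℝ) *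
          ∑ x ∈ antidiagonal (n + 1), sfal N x.1 A * PowerSeries.C (sfbe x.2 B) := by
      rw [Finset.Nat.sum_antidiagonal_succ', mul_add, mul_left_comm, ← map_mul, sfbe_zero_mul,
        map_zero, mul_zero, zero_add, Finset.sum_comm, Finset.mul_sum]
      refine Finset.sum_congr rfl fun x _ => ?_
      rw [mul_left_comm, ← map_mul, sfbe_mul, ← Finset.mul_sum, map_sum]
    rw [e1, e2, ← add_mul, ← mul_assoc]
    have : PowerSeries.C (A : ℝ) - sfphi N A + PowerSeries.C (B : ℝ)
        = PowerSeries.C ((A + B : ℕ) : ℝ) - sfphi N A := by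
      push_cast; rw [map_add]; ring
    rw [this, sfW_mul N A B hAB, one_mul]

/-! h -/
noncomputable def sfh : ℕ → ℕ → ℝ
  | 0 => fun _ => 1
  | j + 1 => fun N => ∑ i ∈ range N, sfh j (i + 1) / ((i : ℝ) + 1)

lemma sf_tele (N b : ℕ) :
    HasSum (fun c : ℕ => if b < c then (1 / (c : ℝ) - 1 / ((N : ℝ) + c)) else 0)
      (∑ i ∈ range N, 1 / ((i : ℝ) + 1 + b)) := by
  have hnn : ∀ c : ℕ, 0 ≤ if b < c then (1 / (c : ℝ) - 1 / ((N : ℝ) + c)) else 0 := by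
    intro c
    split_ifs with h
    · have : (0 : ℝ) < c := by exact_mod_cast (by omega : 0 < c)
      rw [sub_nonneg]
      apply one_div_le_one_div_of_le this
      have : (0:ℝ) ≤ N := by positivity
      linarith
    · exact le_rfl
  have key : HasSum (fun c : ℕ => (1 / ((c + (b+1) : ℕ) : ℝ) - 1 / ((N : ℝ) + (c + (b+1) : ℕ))))
      (∑ i ∈ range N, 1 / ((i : ℝ) + 1 + b)) := by
    rw [hasSum_iff_tendsto_nat_of_nonneg]
    · have hs : ∀ M : ℕ, ∑ c ∈ range M, (1 / ((c + (b+1) : ℕ) : ℝ) - 1 / ((N : ℝ) + (c + (b+1) : ℕ)))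
          = ∑ i ∈ range N, 1 / ((i : ℝ) + 1 + b) - ∑ i ∈ range N, 1 / ((i : ℝ) + 1 + b + M) := by
        intro M
        induction M with
        | zero => simp
        | succ M ih =>
          rw [Finset.sum_range_succ, ih]
          have := Finset.sum_range_sub (fun i : ℕ => 1 / ((i : ℝ) + 1 + b + M)) N
          rw [Finset.sum_sub_distrib] at this
          push_cast at this ⊢
          have e : ∀ i : ℕ, 1 / ((i:ℝ) + 1 + 1 + b + M) = 1 / ((i:ℝ) + 1 + b + (M + 1)) := by
            intro i; congr 1; ring
          simp only [e] at this
          have e2 : 1 / ((M:ℝ) + (b + 1)) = 1 / ((0:ℝ) + 1 + b + M) := by congr 1; ring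
          have e3 : 1 / ((N:ℝ) + ((M:ℝ) + (b + 1))) = 1 / ((N:ℝ) + 1 + b + M) := by congr 1; ring
          rw [e2, e3]
          linarith
      simp only [hs]
      have : Filter.Tendsto (fun M : ℕ => ∑ i ∈ range N, 1 / ((i : ℝ) + 1 + b + M)) Filter.atTop (nhds (∑ i ∈ range N, 0)) := by
        apply tendsto_finsetSum
        intro i _
        simp only [one_div]
        apply Filter.Tendsto.inv_tendsto_atTop
        exact Filter.tendsto_atTop_add_const_left _ _ tendsto_natCast_atTop_atTop
      simpa using (tendsto_const_nhds (x := ∑ i ∈ range N, 1 / ((i : ℝ) + 1 + b))).sub this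
    · intro c
      have := hnn (c + (b+1))
      rwa [if_pos (by omega)] at this
  rw [← hasSum_nat_add_iff' (b+1)]
  have z : ∑ i ∈ range (b+1), (if b < i then (1 / (i : ℝ) - 1 / ((N : ℝ) + i)) else 0) = 0 := by
    apply Finset.sum_eq_zero
    intro i hi
    rw [Finset.mem_range] at hi
    rw [if_neg (by omega)]
  rw [z, sub_zero]
  exact sf_hs key (fun c => by rw [if_pos (by omega)]) rfl

lemma sf_G (l : ℕ) : ∀ N : ℕ, 1 ≤ N →
    HasSum (fun B : ℕ => sfbe l B / ((N : ℝ) + B)) (sfh l N / N) := by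
  induction l with
  | zero =>
    intro N hN
    have := hasSum_single (f := fun B : ℕ => sfbe 0 B / ((N : ℝ) + B)) 0 (by
      intro b hb; simp [sfbe, hb])
    simpa [sfbe, sfh] using this
  | succ l ih =>
    intro N hN
    have hN0 : (N : ℝ) ≠ 0 := by positivity
    let u : ℕ × ℕ → ℝ := fun x => sfbe l x.1 * (if x.1 < x.2 then (1 / (x.2 : ℝ) - 1 / ((N : ℝ) + x.2)) else 0)
    have hu : ∀ x, 0 ≤ u x := by
      rintro ⟨b, c⟩
      apply mul_nonneg (sfbe_nonneg _ _)
      dsimp only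
      split_ifs with h
      · have : (0 : ℝ) < c := by exact_mod_cast (by omega : 0 < c)
        rw [sub_nonneg]
        apply one_div_le_one_div_of_le this
        have : (0:ℝ) ≤ N := by positivity
        linarith
      · exact le_rfl
    have rows : ∀ b, HasSum (fun c => u (b, c)) (sfbe l b * ∑ i ∈ range N, 1 / ((i : ℝ) + 1 + b)) :=
      fun b => (sf_tele N b).mul_left _
    have tot : HasSum (fun b => sfbe l b * ∑ i ∈ range N, 1 / ((i : ℝ) + 1 + b)) (sfh (l+1) N) := by
      have := hasSum_sum (s := range N) (fun i _ => ih (i+1) (by omega))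
      simp only [sfh]
      push_cast at this
      refine sf_hs this (fun b => ?_) rfl
      rw [Finset.mul_sum]
      refine Finset.sum_congr rfl fun i _ => ?_
      ring
    have hsu : Summable u := by
      rw [summable_prod_of_nonneg (fun x => hu x)]
      refine ⟨fun b => (rows b).summable, ?_⟩
      have e : (fun b => ∑' c, u (b, c)) = fun b => sfbe l b * ∑ i ∈ range N, 1 / ((i : ℝ) + 1 + b) :=
        funext fun b => (rows b).tsum_eq
      rw [e]
      exact tot.summable
    have h1 : HasSum u (sfh (l+1) N) := by
      have := hsu.hasSum.prod_fiberwise rows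
      rw [← this.unique tot]
      exact hsu.hasSum
    have h2 : HasSum (fun x : ℕ × ℕ => u x.swap) (sfh (l+1) N) :=
      ((Equiv.prodComm ℕ ℕ).hasSum_iff (f := u) (a := sfh (l+1) N)).2 h1
    have cols : ∀ c, HasSum (fun b => u (b, c)) (N * (sfbe (l+1) c / (N + c))) := by
      intro c
      have := hasSum_sum_of_ne_finset_zero (L := SummationFilter.unconditional ℕ) (f := fun b => u (b, c)) (s := range c) (by
        intro b hb
        rw [Finset.mem_range] at hb
        simp [u, hb])
      refine sf_hs this (fun _ => rfl) ?_
      rcases Nat.eq_zero_or_pos c with rfl | hc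
      · simp [sfbe]
      have e : ∑ b ∈ range c, u (b, c) = (∑ b ∈ range c, sfbe l b) * (1 / (c : ℝ) - 1 / ((N : ℝ) + c)) := by
        rw [Finset.sum_mul]
        refine Finset.sum_congr rfl fun b hb => ?_
        rw [Finset.mem_range] at hb
        simp [u, hb]
      rw [e]
      simp only [sfbe]
      have : (c : ℝ) ≠ 0 := by positivity
      have : (N : ℝ) + c ≠ 0 := by positivity
      field_simp
      ring
    have h3 := (h2.prod_fiberwise (fun c => cols c)).div_const (N : ℝ)
    refine sf_hs h3 (fun c => ?_) rfl
    field_simp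

/-! epsilon -/
noncomputable def sfep : ℕ → ℕ → ℝ
  | 0 => fun N => if N = 0 then 0 else 1
  | j + 1 => fun N => - ∑ A ∈ range N, (A : ℝ)⁻¹ * sfep j A

lemma sfal_sum (N : ℕ) (j : ℕ) : ∀ M ≤ N, ∑ A ∈ range M, sfal N j A = PowerSeries.C (sfep j M) := by
  induction j with
  | zero =>
    intro M hM
    simp only [sfal, sfep]
    rw [Finset.sum_ite_eq']
    rcases Nat.eq_zero_or_pos M with rfl | h
    · simp
    · have : ¬ (M = 0) := by omega
      simp [h, this]
  | succ j ih =>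
    intro M hM
    simp only [sfal, sfep]
    rw [map_neg, map_sum, ← Finset.sum_neg_distrib]
    refine Finset.sum_congr rfl fun A hA => ?_
    rw [Finset.mem_range] at hA
    rw [ih A (by omega), sfW, if_neg (by omega), ← map_mul, add_zero]

lemma sf_EH (N : ℕ) : PowerSeries.mk (fun j => sfep j (N+1)) * PowerSeries.mk (fun l => sfh l N) = 1 ∧
   (PowerSeries.mk (fun j => sfep j (N+1)) * PowerSeries.mk (fun l => sfh l (N+1))) *
     (1 - PowerSeries.C ((N + 1 : ℝ)⁻¹) * PowerSeries.X) = 1 := by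
  have H : ∀ N : ℕ, PowerSeries.mk (fun l => sfh l (N+1)) *
      (1 - PowerSeries.C ((N + 1 : ℝ)⁻¹) * PowerSeries.X) = PowerSeries.mk (fun l => sfh l N) := by
    intro N
    ext d
    rw [mul_sub, mul_one, map_sub, ← mul_assoc]
    cases d with
    | zero => simp [sfh]
    | succ d =>
      rw [PowerSeries.coeff_succ_mul_X, PowerSeries.coeff_mul_C]
      simp only [PowerSeries.coeff_mk, sfh]
      rw [Finset.sum_range_succ]
      ring
  have E : ∀ N : ℕ, PowerSeries.mk (fun j => sfep j (N+1+1)) = PowerSeries.mk (fun j => sfep j (N+1)) *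
      (1 - PowerSeries.C ((N + 1 : ℝ)⁻¹) * PowerSeries.X) := by
    intro N
    ext d
    rw [mul_sub, mul_one, map_sub, ← mul_assoc]
    cases d with
    | zero => simp [sfep]
    | succ d =>
      rw [PowerSeries.coeff_succ_mul_X, PowerSeries.coeff_mul_C]
      simp only [PowerSeries.coeff_mk, sfep]
      rw [Finset.sum_range_succ]
      push_cast
      ring
  have A : PowerSeries.mk (fun j => sfep j (N+1)) * PowerSeries.mk (fun l => sfh l N) = 1 := by
    induction N with
    | zero =>
      have e1 : PowerSeries.mk (fun j => sfep j (0+1)) = 1 := by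
        ext d
        cases d <;> simp [sfep, PowerSeries.coeff_one]
      have e2 : PowerSeries.mk (fun j => sfh j 0) = 1 := by
        ext d
        cases d <;> simp [sfh, PowerSeries.coeff_one]
      rw [e1, e2, one_mul]
    | succ N ih => rw [E, mul_assoc, mul_comm _ (PowerSeries.mk _), H, ih]
  exact ⟨A, by rw [mul_assoc, H, A]⟩

lemma sf_eh (N p : ℕ) (hN : 1 ≤ N) :
    ∑ x ∈ antidiagonal p, sfep x.1 N * sfh x.2 N = ((N : ℝ)⁻¹) ^ p := by
  obtain ⟨M, rfl⟩ : ∃ M, N = M + 1 := ⟨N - 1, by omega⟩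
  have h := (sf_EH M).2
  have h2 : PowerSeries.mk (fun p => ((M + 1 : ℝ)⁻¹) ^ p) *
     (1 - PowerSeries.C ((M + 1 : ℝ)⁻¹) * PowerSeries.X) = 1 := by
    ext d
    rw [mul_sub, mul_one, map_sub, ← mul_assoc]
    cases d with
    | zero => simp
    | succ d =>
      rw [PowerSeries.coeff_succ_mul_X, PowerSeries.coeff_mul_C]
      simp [PowerSeries.coeff_one, pow_succ]
      ring
  have h3 := left_inv_eq_right_inv h ((mul_comm _ _).trans h2)
  have h4 := congrArg (PowerSeries.coeff p) h3
  rw [PowerSeries.coeff_mul] at h4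
  simpa using h4

lemma sf_coeff_al (N j d : ℕ) : PowerSeries.coeff d (sfal N (j+1) N) = - ((N:ℝ)⁻¹ ^ (d+1) * sfep j N) := by
  simp only [sfal]
  rw [sfal_sum N j N le_rfl, map_neg, PowerSeries.coeff_mul_C, sfW, if_pos rfl, PowerSeries.coeff_mk, add_zero]

lemma sf_final (n N d : ℕ) (hN : 1 ≤ N) :
    HasSum (fun B : ℕ => - (PowerSeries.coeff d (∑ x ∈ antidiagonal (n+1), sfal N x.1 N * PowerSeries.C (sfbe x.2 B)))
      / ((N + B : ℕ) : ℝ)) ((N : ℝ)⁻¹ ^ (d + n + 2)) := by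
  have h := hasSum_sum (s := antidiagonal n)
    (fun x _ => (sf_G x.2 N hN).mul_left ((N:ℝ)⁻¹ ^ (d+1) * sfep x.1 N))
  refine sf_hs h (fun B => ?_) ?_
  · rw [Finset.Nat.sum_antidiagonal_succ]
    have : sfal N 0 N = 0 := by
      have h0 : ¬ (N = 0) := by omega
      simp [sfal, h0]
    rw [this, zero_mul, zero_add, map_sum, ← Finset.sum_neg_distrib, Finset.sum_div]
    refine Finset.sum_congr rfl fun x _ => ?_
    rw [PowerSeries.coeff_mul_C, sf_coeff_al]
    push_cast
    ring
  · have := sf_eh N n hN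
    have e : ∀ x ∈ antidiagonal n, (N:ℝ)⁻¹ ^ (d+1) * sfep x.1 N * (sfh x.2 N / N)
       = (N:ℝ)⁻¹ ^ (d+2) * (sfep x.1 N * sfh x.2 N) := by
      intro x _; rw [div_eq_mul_inv]; ring
    rw [Finset.sum_congr rfl e, ← Finset.mul_sum, this]
    ring

/-! paths -/
def sfA {n : ℕ} (p : Fin n → Bool × ℕ) (j : ℕ) : ℕ :=
  ∑ i : Fin n, if (i : ℕ) < j ∧ (p i).1 = true then (p i).2 + 1 else 0

def sfB {n : ℕ} (p : Fin n → Bool × ℕ) (j : ℕ) : ℕ :=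
  ∑ i : Fin n, if (i : ℕ) < j ∧ (p i).1 = false then (p i).2 + 1 else 0

def sfT (n A B : ℕ) : Finset (Fin n → Bool × ℕ) :=
  (Fintype.piFinset fun _ : Fin n => (Finset.univ : Finset Bool) ×ˢ range (A + B)).filter
    fun p => sfA p n = A ∧ sfB p n = B

lemma sf_PS {n : ℕ} (p : Fin n → Bool × ℕ) (j : ℕ) :
    PS (fun i => (p i).2) j = sfA p j + sfB p j := by
  unfold PS sfA sfB
  rw [← Finset.sum_add_distrib, Finset.sum_filter]
  refine Finset.sum_congr rfl fun i _ => ?_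
  cases h : (p i).1 <;> simp

lemma sf_mem_T {n A B : ℕ} (p : Fin n → Bool × ℕ) :
    p ∈ sfT n A B ↔ sfA p n = A ∧ sfB p n = B := by
  unfold sfT
  rw [Finset.mem_filter, Fintype.mem_piFinset]
  refine ⟨fun h => h.2, fun h => ⟨fun i => ?_, h⟩⟩
  rw [Finset.mem_product, Finset.mem_range]
  refine ⟨Finset.mem_univ _, ?_⟩
  have h1 : (p i).2 + 1 ≤ PS (fun i => (p i).2) n := by
    unfold PS
    exact Finset.single_le_sum (f := fun i => (p i).2 + 1) (fun _ _ => Nat.zero_le _)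
      (by simp)
  rw [sf_PS, h.1, h.2] at h1
  omega

lemma sfA_snoc_lt {n : ℕ} (q : Fin n → Bool × ℕ) (x : Bool × ℕ) (j : ℕ) (hj : j ≤ n) :
    sfA (Fin.snoc (α := fun _ => Bool × ℕ) q x) j = sfA q j := by
  unfold sfA
  rw [Fin.sum_univ_castSucc]
  have hnj : ¬ n < j := by omega
  simp [hnj]

lemma sfB_snoc_lt {n : ℕ} (q : Fin n → Bool × ℕ) (x : Bool × ℕ) (j : ℕ) (hj : j ≤ n) :
    sfB (Fin.snoc (α := fun _ => Bool × ℕ) q x) j = sfB q j := by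
  unfold sfB
  rw [Fin.sum_univ_castSucc]
  have hnj : ¬ n < j := by omega
  simp [hnj]

lemma sfA_snoc_last {n : ℕ} (q : Fin n → Bool × ℕ) (x : Bool × ℕ) :
    sfA (Fin.snoc (α := fun _ => Bool × ℕ) q x) (n + 1) =
      sfA q n + if x.1 = true then x.2 + 1 else 0 := by
  unfold sfA
  rw [Fin.sum_univ_castSucc]
  simp only [Fin.snoc_castSucc, Fin.snoc_last, Fin.val_castSucc, Fin.val_last]
  congr 1
  · refine Finset.sum_congr rfl fun i _ => ?_
    simp [(by omega : (i : ℕ) < n + 1)]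
  · simp

lemma sfB_snoc_last {n : ℕ} (q : Fin n → Bool × ℕ) (x : Bool × ℕ) :
    sfB (Fin.snoc (α := fun _ => Bool × ℕ) q x) (n + 1) =
      sfB q n + if x.1 = false then x.2 + 1 else 0 := by
  unfold sfB
  rw [Fin.sum_univ_castSucc]
  simp only [Fin.snoc_castSucc, Fin.snoc_last, Fin.val_castSucc, Fin.val_last]
  congr 1
  · refine Finset.sum_congr rfl fun i _ => ?_
    simp [(by omega : (i : ℕ) < n + 1)]
  · simp

noncomputable def sfF (N : ℕ) {n : ℕ} (p : Fin n → Bool × ℕ) : PowerSeries ℝ :=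
  ∏ i : Fin n, ((if (p i).1 = true then -1 else 1) * sfW N (sfA p (i + 1)) (sfB p (i + 1)))

lemma sfF_snoc (N : ℕ) {n : ℕ} (q : Fin n → Bool × ℕ) (x : Bool × ℕ) :
    sfF N (Fin.snoc (α := fun _ => Bool × ℕ) q x) = sfF N q * ((if x.1 = true then -1 else 1) *
      sfW N (sfA (Fin.snoc (α := fun _ => Bool × ℕ) q x) (n + 1))
        (sfB (Fin.snoc (α := fun _ => Bool × ℕ) q x) (n + 1))) := by
  unfold sfF
  rw [Fin.prod_univ_castSucc]
  simp only [Fin.snoc_castSucc, Fin.snoc_last, Fin.val_castSucc, Fin.val_last]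
  congr 1
  refine Finset.prod_congr rfl fun i _ => ?_
  rw [sfA_snoc_lt _ _ _ (by omega), sfB_snoc_lt _ _ _ (by omega)]

lemma sf_rec (n N A B : ℕ) :
    ∑ p ∈ sfT (n + 1) A B, sfF N p = sfW N A B *
      (- ∑ A' ∈ range A, ∑ q ∈ sfT n A' B, sfF N q + ∑ B' ∈ range B, ∑ q ∈ sfT n A B', sfF N q) := by
  rw [← Finset.sum_filter_add_sum_filter_not (sfT (n + 1) A B) (fun p => (p (Fin.last n)).1 = true),
    mul_add]
  congr 1
  · rw [← Finset.sum_neg_distrib, Finset.mul_sum]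
    simp only [← Finset.sum_neg_distrib, Finset.mul_sum]
    rw [Finset.sum_sigma']
    refine Finset.sum_nbij' (fun p => ⟨sfA (Fin.init p) n, Fin.init p⟩)
      (fun x => Fin.snoc (α := fun _ => Bool × ℕ) x.2 (true, A - x.1 - 1)) ?_ ?_ ?_ ?_ ?_
    · intro p hp
      rw [Finset.mem_filter, sf_mem_T, ← Fin.snoc_init_self p, sfA_snoc_last, sfB_snoc_last,
        Fin.snoc_last] at hp
      obtain ⟨⟨h1, h2⟩, h3⟩ := hp
      simp only [h3] at h1 h2
      simp only [Finset.mem_sigma, Finset.mem_range, sf_mem_T]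
      simp at h1 h2
      exact ⟨by omega, trivial, h2⟩
    · rintro ⟨A', q⟩ hx
      simp only [Finset.mem_sigma, Finset.mem_range, sf_mem_T] at hx
      simp only [Finset.mem_filter, sf_mem_T, sfA_snoc_last, sfB_snoc_last, Fin.snoc_last]
      simp
      omega
    · intro p hp
      rw [Finset.mem_filter, sf_mem_T, ← Fin.snoc_init_self p, sfA_snoc_last, sfB_snoc_last,
        Fin.snoc_last] at hp
      obtain ⟨⟨h1, h2⟩, h3⟩ := hp
      conv_rhs => rw [← Fin.snoc_init_self p]
      simp only [h3] at h1
      simp at h1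
      congr 1
      ext1
      · exact h3.symm
      · show A - sfA (Fin.init p) n - 1 = _
        omega
    · rintro ⟨A', q⟩ hx
      simp only [Finset.mem_sigma, Finset.mem_range, sf_mem_T] at hx
      obtain ⟨h1, h2, h3⟩ := hx
      subst h2
      simp only [Fin.init_snoc]
    · intro p hp
      rw [Finset.mem_filter, sf_mem_T] at hp
      obtain ⟨⟨h1, h2⟩, h3⟩ := hp
      have := sfF_snoc N (Fin.init p) (p (Fin.last n))
      rw [Fin.snoc_init_self, h1, h2, if_pos h3] at this
      rw [this]
      ring
  · rw [Finset.mul_sum]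
    simp only [Finset.mul_sum]
    rw [Finset.sum_sigma']
    refine Finset.sum_nbij' (fun p => ⟨sfB (Fin.init p) n, Fin.init p⟩)
      (fun x => Fin.snoc (α := fun _ => Bool × ℕ) x.2 (false, B - x.1 - 1)) ?_ ?_ ?_ ?_ ?_
    · intro p hp
      rw [Finset.mem_filter, sf_mem_T, ← Fin.snoc_init_self p, sfA_snoc_last, sfB_snoc_last,
        Fin.snoc_last] at hp
      obtain ⟨⟨h1, h2⟩, h3⟩ := hp
      rw [Bool.not_eq_true] at h3
      simp only [h3] at h1 h2
      simp only [Finset.mem_sigma, Finset.mem_range, sf_mem_T]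
      simp at h1 h2
      exact ⟨by omega, h1, trivial⟩
    · rintro ⟨A', q⟩ hx
      simp only [Finset.mem_sigma, Finset.mem_range, sf_mem_T] at hx
      simp only [Finset.mem_filter, sf_mem_T, sfA_snoc_last, sfB_snoc_last, Fin.snoc_last]
      simp
      omega
    · intro p hp
      rw [Finset.mem_filter, sf_mem_T, ← Fin.snoc_init_self p, sfA_snoc_last, sfB_snoc_last,
        Fin.snoc_last] at hp
      obtain ⟨⟨h1, h2⟩, h3⟩ := hp
      rw [Bool.not_eq_true] at h3
      conv_rhs => rw [← Fin.snoc_init_self p]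
      simp only [h3] at h2
      simp at h2
      congr 1
      ext1
      · exact h3.symm
      · show B - sfB (Fin.init p) n - 1 = _
        omega
    · rintro ⟨A', q⟩ hx
      simp only [Finset.mem_sigma, Finset.mem_range, sf_mem_T] at hx
      obtain ⟨h1, h2, h3⟩ := hx
      subst h3
      simp only [Fin.init_snoc]
    · intro p hp
      rw [Finset.mem_filter, sf_mem_T] at hp
      obtain ⟨⟨h1, h2⟩, h3⟩ := hp
      have := sfF_snoc N (Fin.init p) (p (Fin.last n))
      rw [Fin.snoc_init_self, h1, h2, if_neg h3] at this
      rw [this]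
      ring

lemma sf_P (n N : ℕ) (hN : 1 ≤ N) : ∀ A B : ℕ,
    ∑ p ∈ sfT n A B, sfF N p
      = ∑ x ∈ antidiagonal n, sfal N x.1 A * PowerSeries.C (sfbe x.2 B) := by
  induction n with
  | zero =>
    intro A B
    rw [Finset.Nat.antidiagonal_zero, Finset.sum_singleton]
    by_cases h : A = 0 ∧ B = 0
    · obtain ⟨rfl, rfl⟩ := h
      have : sfT 0 0 0 = {Fin.elim0} := by
        ext p
        rw [sf_mem_T, Finset.mem_singleton]
        simp [sfA, sfB, eq_iff_true_of_subsingleton]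
      rw [this, Finset.sum_singleton]
      simp [sfF, sfal, sfbe]
    · have : sfT 0 A B = ∅ := by
        ext p
        rw [sf_mem_T]
        simp [sfA, sfB]
        omega
      rw [this, Finset.sum_empty]
      by_cases hA : A = 0
      · have hB : ¬ (B = 0) := by omega
        simp [sfbe, hB]
      · simp [sfal, hA]
  | succ n ih =>
    intro A B
    rw [sf_rec]
    simp only [ih]
    exact sf_conv n N A B hN

lemma sf_main (n N d : ℕ) (hN : 1 ≤ N) :
    HasSum (fun B : ℕ => ∑ p ∈ sfT (n + 1) N B,
      - (PowerSeries.coeff d (sfF N p)) / ((N + B : ℕ) : ℝ)) ((N : ℝ)⁻¹ ^ (d + n + 2)) := by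
  refine sf_hs (sf_final n N d hN) (fun B => ?_) rfl
  rw [← sf_P _ _ hN, ← Finset.sum_div, map_sum, Finset.sum_neg_distrib]

def sfJ {n : ℕ} (p : Fin n → Bool × ℕ) : Finset (Fin n) := Finset.univ.filter fun i => (p i).1 = true

lemma sfA_eq {n : ℕ} (p : Fin n → Bool × ℕ) : sfA p n = ∑ j ∈ sfJ p, ((p j).2 + 1) := by
  unfold sfA sfJ
  rw [Finset.sum_filter]
  refine Finset.sum_congr rfl fun i _ => ?_
  simp

lemma sfA_lt {n : ℕ} (p : Fin n → Bool × ℕ) (i : Fin n) :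
    sfA p (i + 1) ≠ sfA p n ↔ (i : ℕ) + 2 ≤ (sfJ p).sup fun j => (j : ℕ) + 1 := by
  have hle : ∀ a : Fin n, (if (a : ℕ) < i + 1 ∧ (p a).1 = true then (p a).2 + 1 else 0)
      ≤ if (a : ℕ) < n ∧ (p a).1 = true then (p a).2 + 1 else 0 := by
    intro a
    have := a.2
    split_ifs <;> first | omega | grind
  constructor
  · intro h
    by_contra hc
    apply h
    unfold sfA
    refine Finset.sum_congr rfl fun a _ => ?_
    have ha : (p a).1 = true → (a : ℕ) < i + 1 := by
      intro h1
      have : (a : ℕ) + 1 ≤ (sfJ p).sup fun j => (j : ℕ) + 1 :=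
        Finset.le_sup (f := fun j : Fin n => (j : ℕ) + 1) (by simp [sfJ, h1])
      omega
    have := a.2
    congr 1
    simp only [eq_iff_iff]
    tauto
  · intro h
    have : ((i : ℕ) + 1) < (sfJ p).sup fun j => (j : ℕ) + 1 := by omega
    rw [Finset.lt_sup_iff] at this
    obtain ⟨b, hb, hb2⟩ := this
    apply ne_of_lt
    unfold sfA
    have hb' : (p b).1 = true := by simpa [sfJ] using hb
    refine Finset.sum_lt_sum (fun a _ => hle a) ⟨b, Finset.mem_univ _, ?_⟩
    have hbi : ¬ b ≤ i := by rw [Fin.le_def]; omega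
    simp [hb', hbi]

lemma sf_coeffW (N A B e : ℕ) : PowerSeries.coeff e (sfW N A B)
    = if A ≠ N ∧ e ≠ 0 then 0 else (((A + B : ℕ) : ℝ)⁻¹) ^ (e + 1) := by
  unfold sfW
  by_cases h : A = N
  · simp [h]
  · cases e <;> simp [h, PowerSeries.coeff_C]

lemma sf_coeffF {n k : ℕ} (hk : n + 2 ≤ k) (p : Fin (n + 1) → Bool × ℕ) :
    ∑ kv ∈ Ikr (n + 1) k ((sfJ p).sup fun j => (j : ℕ) + 1),
      ∏ i : Fin (n + 1), (((PS (fun i => (p i).2) ((i : ℕ) + 1) : ℕ) : ℝ)⁻¹) ^ kv i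
    = PowerSeries.coeff (k - n - 2) (∏ i : Fin (n + 1), sfW (sfA p (n + 1)) (sfA p (i + 1)) (sfB p (i + 1)))
       / ((sfA p (n + 1) + sfB p (n + 1) : ℕ) : ℝ) := by
  rw [PowerSeries.coeff_prod, Finset.sum_div]
  have hne : ∀ l : Fin (n + 1) →₀ ℕ, ∀ i : Fin (n + 1), 
      PowerSeries.coeff (l i) (sfW (sfA p (n + 1)) (sfA p (i + 1)) (sfB p (i + 1))) =
      if (i : ℕ) + 2 ≤ ((sfJ p).sup fun j => (j : ℕ) + 1) ∧ l i ≠ 0 then 0 else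
        (((sfA p (i+1) + sfB p (i+1) : ℕ) : ℝ)⁻¹) ^ (l i + 1) := by
    intro l i
    rw [sf_coeffW]
    simp only [sfA_lt]
  simp only [hne]
  rw [← Finset.sum_filter_of_ne (p := fun l : Fin (n + 1) →₀ ℕ => ∀ i : Fin (n + 1),
    (i : ℕ) + 2 ≤ ((sfJ p).sup fun j => (j : ℕ) + 1) → l i = 0)]
  · symm
    refine Finset.sum_nbij' (fun l i => l i + 1 + if i = Fin.last n then 1 else 0)
      (fun kv => Finsupp.equivFunOnFinite.symm fun i => kv i - 1 - if i = Fin.last n then 1 else 0)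
      ?_ ?_ ?_ ?_ ?_
    · intro l hl
      rw [Finset.mem_filter, Finset.mem_finsuppAntidiag] at hl
      obtain ⟨⟨h1, -⟩, h2⟩ := hl
      have hs : ∑ i, (l i + 1 + if i = Fin.last n then 1 else 0) = k := by
        rw [Finset.sum_add_distrib, Finset.sum_add_distrib, h1]
        simp
        omega
      unfold Ikr
      rw [Finset.mem_filter, Fintype.mem_piFinset]
      refine ⟨fun i => ?_, fun i => by dsimp only; omega, fun i hi => ?_, hs, fun i hi => ?_⟩
      · rw [Finset.mem_range]
        have := Finset.single_le_sum (f := fun i => (l i + 1 + if i = Fin.last n then 1 else 0))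
          (fun _ _ => Nat.zero_le _) (Finset.mem_univ i)
        rw [hs] at this
        exact Nat.lt_succ_of_le this
      · have : i = Fin.last n := by ext; simpa using hi
        simp [this]
      · have hi2 : ((sfJ p).sup fun j => (j : ℕ) + 1) ≤ n + 1 := by
          apply Finset.sup_le; intro b _; have := b.2; omega
        have : i ≠ Fin.last n := by rintro rfl; simp at hi; omega
        simp [this, h2 i hi]
    · intro kv hkv
      unfold Ikr at hkv
      rw [Finset.mem_filter] at hkv
      obtain ⟨-, h1, h2, h3, h4⟩ := hkv
      have hl := h2 (Fin.last n) (by simp)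
      rw [Finset.mem_filter, Finset.mem_finsuppAntidiag]
      refine ⟨⟨?_, Finset.subset_univ _⟩, ?_⟩
      · have e : ∑ i, kv i = ∑ i, ((kv i - 1 - if i = Fin.last n then 1 else 0) + 1 + if i = Fin.last n then 1 else 0) := by
          refine Finset.sum_congr rfl fun i _ => ?_
          have := h1 i
          split_ifs with h
          · subst h; omega
          · omega
        rw [Finset.sum_add_distrib, Finset.sum_add_distrib, h3] at e
        simp at e
        simp
        omega
      · intro i hi
        simp [h4 i hi]
    · intro l hl
      ext i
      simp
    · intro kv hkv
      unfold Ikr at hkv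
      rw [Finset.mem_filter] at hkv
      obtain ⟨-, h1, h2, h3, h4⟩ := hkv
      have hl := h2 (Fin.last n) (by simp)
      funext i
      have := h1 i
      simp only [Finsupp.equivFunOnFinite_symm_apply_apply]
      split_ifs with h
      · subst h; omega
      · omega
    · intro l hl
      rw [Finset.mem_filter] at hl
      have e : ∀ i : Fin (n+1), ¬ ((i : ℕ) + 2 ≤ ((sfJ p).sup fun j => (j : ℕ) + 1) ∧ l i ≠ 0) := by
        intro i ⟨h1, h2⟩
        exact h2 (hl.2 i h1)
      simp only [e, if_false, sf_PS]
      simp only [pow_add _ (_ + 1), Finset.prod_mul_distrib]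
      rw [div_eq_mul_inv]
      congr 1
      rw [Finset.prod_eq_single (Fin.last n)]
      · simp
      · intro b _ hb; simp [hb]
      · simp
  · intro l hl hl2 i hi
    by_contra hc
    apply hl2
    rw [Finset.prod_eq_zero (Finset.mem_univ i), zero_div]
    rw [if_pos ⟨hi, hc⟩]

lemma sfF_eq {n : ℕ} (N : ℕ) (p : Fin n → Bool × ℕ) (d : ℕ) :
    PowerSeries.coeff d (sfF N p) = (-1) ^ (sfJ p).card *
      PowerSeries.coeff d (∏ i : Fin n, sfW N (sfA p (i + 1)) (sfB p (i + 1))) := by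
  unfold sfF
  rw [Finset.prod_mul_distrib, Finset.prod_ite, Finset.prod_const, Finset.prod_const_one, mul_one]
  have : ((-1 : PowerSeries ℝ)) ^ (sfJ p).card = PowerSeries.C ((-1) ^ (sfJ p).card) := by
    simp
  change PowerSeries.coeff d ((-1 : PowerSeries ℝ) ^ (sfJ p).card * _) = _
  rw [this, PowerSeries.coeff_C_mul]

lemma sf_hsC {ι : Type*} {f g : ι → ℂ} {a b : ℂ} (h : HasSum f a) (hfg : ∀ x, g x = f x)
    (hab : b = a) : HasSum g b := by
  subst hab
  rwa [show g = f from funext hfg]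

noncomputable def sfV (n k : ℕ) (f : ℕ → ℂ) (J : Finset (Fin n)) (mv : Fin n → ℕ) : ℂ :=
  ∑ kv ∈ Ikr n k (J.sup fun j => (j : ℕ) + 1), (-1 : ℂ) ^ (J.card - 1) *
    (f (∑ j ∈ J, (mv j + 1)) / ∏ i : Fin n, ((PS mv ((i : ℕ) + 1) : ℕ) : ℂ) ^ kv i)

lemma sfV_eq {n k : ℕ} (hk : n + 2 ≤ k) (f : ℕ → ℂ) (p : Fin (n + 1) → Bool × ℕ)
    (hJ : (sfJ p).Nonempty) :
    sfV (n + 1) k f (sfJ p) (fun i => (p i).2) = f (sfA p (n + 1)) *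
      ((- (PowerSeries.coeff (k - n - 2) (sfF (sfA p (n + 1)) p)) /
        ((sfA p (n + 1) + sfB p (n + 1) : ℕ) : ℝ) : ℝ) : ℂ) := by
  rw [sfF_eq, neg_div, mul_div_assoc, ← sf_coeffF hk p, sfV, ← sfA_eq p]
  obtain ⟨c, hc⟩ : ∃ c, (sfJ p).card = c + 1 := ⟨(sfJ p).card - 1, by
    have := hJ.card_pos; omega⟩
  rw [hc, Nat.add_sub_cancel]
  push_cast
  rw [← neg_mul, Finset.mul_sum, Finset.mul_sum]
  refine Finset.sum_congr rfl fun kv _ => ?_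
  rw [div_eq_mul_inv, ← Finset.prod_inv_distrib]
  simp only [inv_pow]
  ring

/-- The sum formula for the multiple `L`-values conjectured by
Essouabri-Matsumoto-Tsumura. -/
theorem sum_formula_L (n k : ℕ) (hn : 1 ≤ n) (hk : n + 1 ≤ k) (f : ℕ → ℂ)
    (habs : ∀ J : Finset (Fin n), J.Nonempty →
      ∀ kv ∈ Ikr n k (J.sup fun j => (j : ℕ) + 1),
        Summable fun mv : Fin n → ℕ =>
          ‖f (∑ j ∈ J, (mv j + 1)) / ∏ i : Fin n, ((PS mv ((i : ℕ) + 1) : ℕ) : ℂ) ^ kv i‖)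
    (hf : Summable fun m : ℕ => ‖f (m + 1) / ((m + 1 : ℕ) : ℂ) ^ k‖) :
    ∑ J ∈ (Finset.univ : Finset (Fin n)).powerset.filter Finset.Nonempty,
      ∑ kv ∈ Ikr n k (J.sup fun j => (j : ℕ) + 1),
        (-1 : ℂ) ^ (J.card - 1) * LVal n kv f J
      = ∑' m : ℕ, f (m + 1) / ((m + 1 : ℕ) : ℂ) ^ k := by
  obtain ⟨n, rfl⟩ : ∃ n', n = n' + 1 := ⟨n - 1, by omega⟩
  set JJ := (Finset.univ : Finset (Fin (n + 1))).powerset.filter Finset.Nonempty with hJJ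
  set S := ∑ J ∈ JJ, ∑ kv ∈ Ikr (n + 1) k (J.sup fun j => (j : ℕ) + 1),
        (-1 : ℂ) ^ (J.card - 1) * LVal (n + 1) kv f J with hS
  have hV : ∀ J ∈ JJ, HasSum (sfV (n + 1) k f J)
      (∑ kv ∈ Ikr (n + 1) k (J.sup fun j => (j : ℕ) + 1),
        (-1 : ℂ) ^ (J.card - 1) * LVal (n + 1) kv f J) := by
    intro J hJ
    have hJ' : J.Nonempty := (Finset.mem_filter.1 hJ).2
    exact hasSum_sum fun kv hkv => ((habs J hJ' kv hkv).of_norm.hasSum).mul_left _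
  have hVp : ∀ J ∈ JJ, HasSum (fun p : Fin (n + 1) → Bool × ℕ =>
      if sfJ p = J then sfV (n + 1) k f J (fun i => (p i).2) else 0)
      (∑ kv ∈ Ikr (n + 1) k (J.sup fun j => (j : ℕ) + 1),
        (-1 : ℂ) ^ (J.card - 1) * LVal (n + 1) kv f J) := by
    intro J hJ
    have hinj : Function.Injective
        (fun (mv : Fin (n + 1) → ℕ) (i : Fin (n + 1)) => (decide (i ∈ J), mv i)) := by
      intro a b hab
      funext i
      exact congrArg Prod.snd (congrFun hab i)
    rw [← hinj.hasSum_iff]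
    · refine sf_hsC (hV J hJ) (fun mv => ?_) rfl
      have : sfJ (fun i : Fin (n + 1) => (decide (i ∈ J), mv i)) = J := by
        ext i; simp [sfJ]
      simp only [Function.comp, this, if_true]
    · intro p hp
      rw [if_neg]
      intro h
      apply hp
      refine ⟨fun i => (p i).2, ?_⟩
      funext i
      ext1
      · subst h
        simp [sfJ]
      · rfl
  have hX := hasSum_sum hVp
  rw [← hS] at hX
  have hX2 := hX.tsum_fiberwise (fun p => (sfA p (n + 1), sfB p (n + 1)))
  have hX3 : HasSum (fun c : ℕ × ℕ => ∑ p ∈ sfT (n + 1) c.1 c.2, ∑ J ∈ JJ,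
      if sfJ p = J then sfV (n + 1) k f J (fun i => (p i).2) else 0) S := by
    refine sf_hsC hX2 (fun c => ?_) rfl
    have hset : ((fun p : Fin (n + 1) → Bool × ℕ => (sfA p (n + 1), sfB p (n + 1))) ⁻¹' {c})
        = ↑(sfT (n + 1) c.1 c.2) := by
      ext p
      simp [sf_mem_T, Prod.ext_iff]
    rw [hset]
    exact (Finset.tsum_subtype' (sfT (n + 1) c.1 c.2) (fun p => ∑ J ∈ JJ,
      if sfJ p = J then sfV (n + 1) k f J (fun i => (p i).2) else 0)).symm
  have rows : ∀ A : ℕ, HasSum (fun B : ℕ => ∑ p ∈ sfT (n + 1) A B, ∑ J ∈ JJ,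
      if sfJ p = J then sfV (n + 1) k f J (fun i => (p i).2) else 0)
      (if A = 0 then 0 else f A / (A : ℂ) ^ k) := by
    intro A
    rcases Nat.eq_zero_or_pos A with rfl | hA
    · refine sf_hsC hasSum_zero (fun B => ?_) (by simp)
      refine Finset.sum_eq_zero fun p hp => Finset.sum_eq_zero fun J hJ => ?_
      rw [if_neg]
      rintro rfl
      obtain ⟨i, hi⟩ := (Finset.mem_filter.1 hJ).2
      rw [sf_mem_T, sfA_eq] at hp
      have := (Finset.sum_eq_zero_iff.1 hp.1) i hi
      omega
    · have hm := (Complex.hasSum_ofReal.2 (sf_main n A (k - n - 2) hA)).mul_left (f A)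
      refine sf_hsC hm (fun B => ?_) ?_
      · rw [Complex.ofReal_sum, Finset.mul_sum]
        refine Finset.sum_congr rfl fun p hp => ?_
        rw [sf_mem_T] at hp
        have hne : (sfJ p).Nonempty := by
          rw [Finset.nonempty_iff_ne_empty]
          intro h0
          have := sfA_eq p
          rw [h0, Finset.sum_empty] at this
          omega
        rw [Finset.sum_ite_eq, if_pos (by simp [hJJ, hne]), sfV_eq (by omega) f p hne, hp.1, hp.2]
      · rw [if_neg (by omega), show k - n - 2 + n + 2 = k by omega]
        push_cast
        rw [inv_pow, div_eq_mul_inv]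
  have hfin := hX3.prod_fiberwise rows
  rw [← hasSum_nat_add_iff' 1] at hfin
  simp only [Finset.sum_range_one, if_true, sub_zero] at hfin
  rw [← hfin.tsum_eq]
  refine tsum_congr fun m => ?_
  rw [if_neg (by omega)]
end

section
/- Let n, k, m be positive integers with k ≥ n+1. Then Σ_{∅≠J⊆{1,…,n}} (−1)^{|J|−1} S(k, m, J) = 1/m^k. -/
open Finset

/-- `S n k m J` is the quantity `S(k,m,J)`: the sum over `𝐤 ∈ I(k, max J)` and over
tuples `𝐦` of positive integers with `∑_{j∈J} m_j = m` of
`1/(m₁^{k₁}(m₁+m₂)^{k₂}⋯(m₁+⋯+mₙ)^{kₙ})`. -/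
noncomputable def S (n k m : ℕ) (J : Finset (Fin n)) : ℝ :=
  ∑ kv ∈ Ikr n k (J.sup fun j => (j : ℕ) + 1),
    ∑' mv : {mv : Fin n → ℕ // (∑ j ∈ J, (mv j + 1)) = m},
      (∏ i : Fin n, ((PS mv.val ((i : ℕ) + 1) : ℕ) : ℝ) ^ kv i)⁻¹

/-- coefficients of `(1-t)^z` -/
noncomputable def Pz : ℕ → PowerSeries ℝ
  | 0 => 1
  | n+1 => PowerSeries.C ((n+1:ℝ)⁻¹) * (PowerSeries.C (n:ℝ) - PowerSeries.X) * Pz n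

lemma Pz_succ (n : ℕ) : PowerSeries.C ((n:ℝ)+1) * Pz (n+1) =
    (PowerSeries.C (n:ℝ) - PowerSeries.X) * Pz n := by
  rw [Pz, ← mul_assoc, ← mul_assoc, ← map_mul, mul_inv_cancel₀ (by positivity)]
  simp

lemma Pz_sum (j : ℕ) : PowerSeries.C (j:ℝ) * Pz j =
    - PowerSeries.X * ∑ l ∈ range j, Pz l := by
  induction j with
  | zero => simp
  | succ j ih =>
    have h := Pz_succ j
    push_cast
    rw [h, sum_range_succ, sub_mul, ih]; ring

noncomputable def Ez (N : ℕ) : PowerSeries ℝ := ∑ l ∈ range N, Pz l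

noncomputable def hh : ℕ → ℕ → ℝ
  | 0, _ => 1
  | s+1, N => ∑ a ∈ range N, hh s (a+1) / (a+1)

noncomputable def Hz (N : ℕ) : PowerSeries ℝ := PowerSeries.mk fun s => hh s N

lemma Hz_succ (N : ℕ) : Hz (N+1) * (1 - PowerSeries.C ((N+1:ℝ)⁻¹) * PowerSeries.X) = Hz N := by
  ext s
  rw [mul_sub, mul_one, mul_left_comm, map_sub, PowerSeries.coeff_C_mul]
  cases s with
  | zero => simp [Hz, hh]
  | succ s =>
    rw [PowerSeries.coeff_succ_mul_X]
    simp [Hz, hh, sum_range_succ]; ring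

lemma Ez_succ (N : ℕ) : Ez (N+2) = (1 - PowerSeries.C ((N+1:ℝ)⁻¹) * PowerSeries.X) * Ez (N+1) := by
  have h := Pz_sum (N+1)
  have h2 : Pz (N+1) = - PowerSeries.C ((N+1:ℝ)⁻¹) * PowerSeries.X * Ez (N+1) := by
    have : PowerSeries.C ((N+1:ℝ)⁻¹) * (PowerSeries.C ((N+1:ℕ):ℝ) * Pz (N+1)) = Pz (N+1) := by
      push_cast
      rw [← mul_assoc, ← map_mul, inv_mul_cancel₀ (by positivity)]; simp
    rw [← this, h, Ez]; ring
  rw [Ez, sum_range_succ, h2, Ez]; ring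

lemma Hz_Ez (N : ℕ) : Hz N * Ez (N+1) = 1 := by
  induction N with
  | zero =>
    have : Hz 0 = 1 := by
      ext s; cases s <;> simp [Hz, hh, PowerSeries.coeff_one]
    simp [this, Ez, Pz]
  | succ N ih => rw [Ez_succ, ← mul_assoc, Hz_succ, ih]

lemma Hz_Ez_coeff (N n : ℕ) : PowerSeries.coeff n (Hz (N+1) * Ez (N+1)) = ((N+1:ℝ)⁻¹)^n := by
  have h : (Hz (N+1) * Ez (N+1)) * (1 - PowerSeries.C ((N+1:ℝ)⁻¹) * PowerSeries.X) = 1 := by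
    rw [mul_right_comm, Hz_succ, Hz_Ez]
  set F := Hz (N+1) * Ez (N+1) with hF
  have h2 : F = 1 + PowerSeries.C ((N+1:ℝ)⁻¹) * (F * PowerSeries.X) := by
    linear_combination h
  induction n with
  | zero => rw [h2]; simp
  | succ n ih =>
    rw [h2, map_add, PowerSeries.coeff_C_mul, PowerSeries.coeff_succ_mul_X, ih]
    simp [PowerSeries.coeff_one, pow_succ, mul_comm]

/-! ### limit of the tail -/

noncomputable def ee : ℕ → ℕ → ℝ
  | 0, _ => 1
  | s+1, b => ∑ a ∈ range b, ee s a / (a+1)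

lemma ee_div (s : ℕ) (c : ℕ) : Filter.Tendsto (fun L : ℕ => ee s L / (L + c + 1)) Filter.atTop (nhds 0) := by
  have key : ∀ s, (Filter.Tendsto (fun L : ℕ => ee s L / (L + 1)) Filter.atTop (nhds 0)) →
      Filter.Tendsto (fun L : ℕ => ee s L / (L + c + 1)) Filter.atTop (nhds 0) := by
    intro s h
    have h2 : Filter.Tendsto (fun L : ℕ => |ee s L / (L + 1)|) Filter.atTop (nhds 0) := by
      simpa using h.abs
    refine squeeze_zero_norm (fun L => ?_) h2
    rw [Real.norm_eq_abs, abs_div, abs_div]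
    gcongr
    have : (0:ℝ) ≤ c := by positivity
    linarith
  apply key
  induction s with
  | zero => simpa [ee] using tendsto_one_div_add_atTop_nhds_zero_nat (𝕜 := ℝ)
  | succ s ih =>
    have h := ih.cesaro
    have h2 : Filter.Tendsto (fun L : ℕ => |(L:ℝ)⁻¹ * ee (s+1) L|) Filter.atTop (nhds 0) := by
      simpa [ee] using h.abs
    refine squeeze_zero_norm' ?_ h2
    filter_upwards [Filter.eventually_ge_atTop 1] with L hL
    have hL' : (0:ℝ) < L := by positivity
    rw [Real.norm_eq_abs, abs_div, abs_mul, abs_inv, mul_comm, ← div_eq_mul_inv]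
    gcongr
    linarith

lemma abel (e f : ℕ → ℝ) (L : ℕ) : ∑ a ∈ range L, e a * (f a - f (a+1)) =
    e 0 * f 0 + ∑ a ∈ range L, (e (a+1) - e a) * f (a+1) - e L * f L := by
  induction L with
  | zero => simp
  | succ L ih => rw [sum_range_succ, sum_range_succ, ih]; ring

lemma tail_lim (s N : ℕ) : Filter.Tendsto
    (fun L : ℕ => ∑ a ∈ range L, ee s a * (1/((a:ℝ)+1) - 1/(a+N+1))) Filter.atTop
    (nhds (hh (s+1) N)) := by
  induction s generalizing N with
  | zero =>
    induction N with
    | zero => simp [hh]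
    | succ N ihN =>
      have : Filter.Tendsto (fun L : ℕ => ∑ a ∈ range L, ee 0 a * (1/((a:ℝ)+N+1) - 1/((a+1:ℕ)+N+1))) Filter.atTop (nhds (hh 0 (N+1)/(N+1))) := by
        have h := ee_div 0 N
        have h2 := h.const_sub (1/((N:ℝ)+1))
        convert h2 using 2
        · rename_i L
          have := abel (fun a => ee 0 a) (fun a => 1/((a:ℝ)+N+1)) L
          rw [this]; simp [ee]
        · simp [hh]
      have h3 := ihN.add this
      convert h3 using 2
      · rw [← sum_add_distrib]
        refine sum_congr rfl fun a _ => ?_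
        push_cast; ring
      · simp only [hh]; rw [sum_range_succ]
  | succ s ih =>
    induction N with
    | zero => simp [hh]
    | succ N ihN =>
      have : Filter.Tendsto (fun L : ℕ => ∑ a ∈ range L, ee (s+1) a * (1/((a:ℝ)+N+1) - 1/((a+1:ℕ)+N+1))) Filter.atTop (nhds (hh (s+1) (N+1)/(N+1))) := by
        have h := ee_div (s+1) N
        have h2 := ((ih (N+1)).div_const ((N:ℝ)+1)).sub h
        convert h2 using 2
        · rename_i L
          have := abel (fun a => ee (s+1) a) (fun a => 1/((a:ℝ)+N+1)) L
          rw [this]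
          have e0 : ee (s+1) 0 = 0 := by simp [ee]
          rw [e0, zero_mul, zero_add, sum_div]
          congr 1
          · refine sum_congr rfl fun a _ => ?_
            have : ee (s+1) (a+1) - ee (s+1) a = ee s a / (a+1) := by
              simp [ee, sum_range_succ]
            rw [this]
            push_cast
            have : (a:ℝ)+1+N+1 ≠ 0 := by positivity
            have : (a:ℝ)+(N+1)+1 ≠ 0 := by positivity
            field_simp
            ring
          · ring
        · simp
      have h3 := ihN.add this
      convert h3 using 2
      · rw [← sum_add_distrib]
        refine sum_congr rfl fun a _ => ?_
        push_cast; ring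
      · have e : ∀ N, hh (s+1+1) N = ∑ a ∈ range N, hh (s+1) (a+1)/(a+1) := fun N => by rw [hh]
        rw [e, e, sum_range_succ]

/-! ### the head -/

section head
set_option linter.unusedSectionVars false
variable {A : Type*} [CommRing A] [Algebra ℝ A]

/-- coefficients of `((1-xt)/(1-t))^z` -/
noncomputable def Uz (x z : A) : ℕ → A
  | p => if p = 0 then 1 else
    z * algebraMap ℝ A ((p:ℝ)⁻¹) * ∑ q : Fin p, (1 - x ^ (p - (q:ℕ))) * Uz x z q
decreasing_by exact q.2

lemma Uz_zero (x z : A) : Uz x z 0 = 1 := by rw [Uz]; simp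

lemma Uz_succ (x z : A) (p : ℕ) : Uz x z (p+1) = 
    z * algebraMap ℝ A (((p+1:ℕ):ℝ)⁻¹) * ∑ q ∈ range (p+1), (1 - x ^ (p + 1 - q)) * Uz x z q := by
  rw [Uz, Finset.sum_range]; simp

lemma Uz_rec (x z : A) (p : ℕ) : (p : A) * Uz x z p =
    z * ∑ q ∈ range p, (1 - x ^ (p - q)) * Uz x z q := by
  cases p with
  | zero => simp
  | succ p =>
    rw [Uz_succ]
    have : ((p+1:ℕ):A) * algebraMap ℝ A (((p+1:ℕ):ℝ)⁻¹) = 1 := by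
      rw [← map_natCast (algebraMap ℝ A), ← map_mul, mul_inv_cancel₀ (by positivity), map_one]
    linear_combination (z * ∑ q ∈ range (p+1), (1 - x ^ (p + 1 - q)) * Uz x z q) * this

lemma nat_cancel {a b : A} (n : ℕ) (h : ((n+1:ℕ):A) * a = ((n+1:ℕ):A) * b) : a = b := by
  have : algebraMap ℝ A (((n+1:ℕ):ℝ)⁻¹) * ((n+1:ℕ):A) = 1 := by
      rw [← map_natCast (algebraMap ℝ A), ← map_mul, inv_mul_cancel₀ (by positivity), map_one]
  linear_combination (b - a) * this + algebraMap ℝ A (((n+1:ℕ):ℝ)⁻¹) * h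

open PowerSeries in
lemma coeff_mul_mk (c u : ℕ → A) (h0 : c 0 = 0) (N : ℕ) :
    coeff N (PowerSeries.mk c * PowerSeries.mk u) = ∑ q ∈ range N, c (N - q) * u q := by
  rw [mul_comm, coeff_mul, Finset.Nat.sum_antidiagonal_eq_sum_range_succ_mk, sum_range_succ]
  simp [h0]
  exact sum_congr rfl fun q _ => mul_comm _ _

open PowerSeries in
lemma head_conv (x z : A) (P : ℕ → A) (hP0 : P 0 = 1)
    (hP : ∀ j : ℕ, (j:A) * P j = - z * ∑ l ∈ range j, P l) (N : ℕ) :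
    ∑ p ∈ range (N+1), (z * ∑ q ∈ range p, x ^ (p - q) * Uz x z q) * P (N - p)
      = z * x ^ N * ∑ l ∈ range N, P l := by
  set g : PowerSeries A := PowerSeries.mk fun j => if j = 0 then 0 else 1 with hg
  set gx : PowerSeries A := PowerSeries.mk fun j => if j = 0 then 0 else x ^ j with hgx
  set Uh : PowerSeries A := PowerSeries.mk (Uz x z) with hU
  set Ph : PowerSeries A := PowerSeries.mk P with hPh
  have coX : ∀ (F : PowerSeries A) (n : ℕ), coeff n (X * derivative A F) = (n:A) * coeff n F := by
    intro F n
    cases n with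
    | zero => simp
    | succ n => rw [coeff_succ_X_mul]; simp [coeff_derivative, mul_comm]
  have cgx : ∀ (u : ℕ → A) (n : ℕ), coeff n (gx * PowerSeries.mk u) = ∑ q ∈ range n, x ^ (n - q) * u q := by
    intro u n
    rw [hgx, coeff_mul_mk _ _ (by simp)]
    refine sum_congr rfl fun q hq => ?_
    rw [if_neg]; simp at hq; omega
  have cg : ∀ (u : ℕ → A) (n : ℕ), coeff n (g * PowerSeries.mk u) = ∑ q ∈ range n, u q := by
    intro u n
    rw [hg, coeff_mul_mk _ _ (by simp)]
    refine sum_congr rfl fun q hq => ?_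
    rw [if_neg, one_mul]; simp at hq; omega
  have dU : X * derivative A Uh = C z * ((g - gx) * Uh) := by
    ext n
    rw [coX, coeff_C_mul, sub_mul, map_sub, hU, cg, cgx, coeff_mk, Uz_rec, ← sum_sub_distrib]
    congr 1
    exact sum_congr rfl fun q _ => by ring
  have dP : X * derivative A Ph = - C z * (g * Ph) := by
    ext n
    rw [coX, neg_mul, map_neg, coeff_C_mul, hPh, cg, coeff_mk, hP]; ring
  have dUP : X * derivative A (Uh * Ph) = - C z * (gx * (Uh * Ph)) := by
    rw [Derivation.leibniz, smul_eq_mul, smul_eq_mul]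
    linear_combination Uh * dP + Ph * dU
  have key : ∀ n, coeff n (Uh * Ph) = x ^ n * P n := by
    intro n
    induction n using Nat.strong_induction_on with
    | _ n ih =>
    cases n with
    | zero => simp [hU, hPh, Uz_zero, hP0]
    | succ n =>
      apply nat_cancel (A := A) n
      rw [← coX, dUP, neg_mul, map_neg, coeff_C_mul]
      have : Uh * Ph = PowerSeries.mk (fun n => coeff n (Uh * Ph)) := by ext; simp
      have hs : ∑ q ∈ range (n+1), x ^ (n + 1 - q) * coeff q (Uh * Ph) =
          x ^ (n+1) * ∑ q ∈ range (n+1), P q := by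
        rw [mul_sum]
        refine sum_congr rfl fun q hq => ?_
        simp at hq
        rw [ih q (by omega), ← mul_assoc, ← pow_add]
        congr 2; omega
      rw [this, cgx, hs]
      linear_combination (-x ^ (n+1)) * hP (n+1)
  have h2 : coeff N (C z * (gx * Uh) * Ph) = z * x ^ N * ∑ l ∈ range N, P l := by
    have : C z * (gx * Uh) * Ph = - (X * derivative A (Uh * Ph)) := by rw [dUP]; ring
    rw [this, map_neg, coX, key, mul_left_comm, hP]; ring
  rw [← h2, coeff_mul, Finset.Nat.sum_antidiagonal_eq_sum_range_succ_mk]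
  refine sum_congr rfl fun p _ => ?_
  rw [coeff_C_mul, cgx]; simp [hPh]

lemma total_head (x z : A) (P : ℕ → A) (hP0 : P 0 = 1)
    (hP : ∀ j : ℕ, (j:A) * P j = - z * ∑ l ∈ range j, P l) (M : ℕ) (Φ Q t : ℕ → A)
    (hΦ : ∀ q ≤ M, Φ q = z * ∑ p ∈ Ioc q M, (x ^ (p - q) * Q p +
      (1 - x ^ (p - q)) * (algebraMap ℝ A ((p:ℝ)⁻¹) * Φ p)))
    (hQ : ∀ p ∈ Ioc 0 M, Q p = ∑ N ∈ Icc p M, P (N - p) * t N) :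
    Φ 0 = ∑ N ∈ Ioc 0 M, t N * (z * x ^ N * ∑ l ∈ range N, P l) := by
  set U := Uz x z with hU
  have swap : ∀ f : ℕ → ℕ → A, ∑ q ∈ range (M+1), ∑ p ∈ Ioc q M, f q p =
      ∑ p ∈ Ioc 0 M, ∑ q ∈ range p, f q p := by
    intro f
    apply sum_comm'
    intro q p; simp; omega
  have h1 : ∑ q ∈ range (M+1), U q * Φ q = ∑ p ∈ Ioc 0 M, (z * ∑ q ∈ range p, x ^ (p - q) * U q) * Q p
      + ∑ p ∈ Ioc 0 M, U p * Φ p := by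
    calc _ = ∑ q ∈ range (M+1), ∑ p ∈ Ioc q M, (U q * (z * (x ^ (p - q) * Q p +
      (1 - x ^ (p - q)) * (algebraMap ℝ A ((p:ℝ)⁻¹) * Φ p)))) := by
          refine sum_congr rfl fun q hq => ?_
          simp at hq
          rw [hΦ q (by omega), mul_sum, mul_sum]
      _ = _ := by
        rw [swap, ← sum_add_distrib]
        refine sum_congr rfl fun p hp => ?_
        simp at hp
        obtain ⟨p, rfl⟩ : ∃ p', p = p' + 1 := ⟨p - 1, by omega⟩
        rw [hU, Uz_succ, mul_sum, mul_sum, sum_mul, sum_mul, ← sum_add_distrib]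
        refine sum_congr rfl fun q hq => ?_
        ring
  have h2 : ∑ q ∈ range (M+1), U q * Φ q = Φ 0 + ∑ p ∈ Ioc 0 M, U p * Φ p := by
    have : range (M+1) = insert 0 (Ioc 0 M) := by ext; simp
    rw [this, sum_insert (by simp), hU, Uz_zero, one_mul]
  have h3 : Φ 0 = ∑ p ∈ Ioc 0 M, (z * ∑ q ∈ range p, x ^ (p - q) * U q) * Q p := by
    linear_combination h1 - h2
  rw [h3]
  have : ∀ p ∈ Ioc 0 M, (z * ∑ q ∈ range p, x ^ (p - q) * U q) * Q p = 
     ∑ N ∈ Icc p M, (z * ∑ q ∈ range p, x ^ (p - q) * U q) * (P (N - p) * t N) := by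
    intro p hp; rw [hQ p hp, mul_sum]
  rw [sum_congr rfl this, sum_comm' (t' := Ioc 0 M) (s' := fun N => Ioc 0 N)]
  · refine sum_congr rfl fun N _ => ?_
    rw [← head_conv x z P hP0 hP N, mul_sum]
    have : range (N+1) = insert 0 (Ioc 0 N) := by ext; simp
    rw [this, sum_insert (by simp)]
    simp
    refine sum_congr rfl fun p _ => ?_
    ring
  · intro p N; simp; omega

end head

/-! ### partial fractions -/

noncomputable def kk (M : ℕ) : ℕ → ℕ → ℕ → ℝ
  | 0, p, N => if p = N then (N:ℝ)⁻¹ else 0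
  | s+1, p, N => if N = p then
        ∑ N' ∈ Ioc p M, (∑ q ∈ Ioc p N', kk M s q N') / ((N':ℝ) - p)
      else - (∑ q ∈ Ioc p N, kk M s q N) / ((N:ℝ) - p)

noncomputable def Qd (M : ℕ) : ℕ → ℕ → ℕ → ℝ
  | 0, d, p => ((p:ℝ)^(d+2))⁻¹
  | s+1, d, p => ∑ j ∈ range (d+1), ((p:ℝ)^(j+1))⁻¹ * ∑ q ∈ Ioc p M, Qd M s (d-j) q

noncomputable def ww (M : ℕ) (y : ℕ) : ℕ → ℕ → ℝ
  | 0, p => ((p:ℝ) * (p - y))⁻¹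
  | s+1, p => ((p:ℝ)-y)⁻¹ * ∑ q ∈ Ioc p M, ww M y s q

lemma Ioc_swap (p M : ℕ) (f : ℕ → ℕ → ℝ) : ∑ q ∈ Ioc p M, ∑ N ∈ Icc q M, f q N =
    ∑ N ∈ Ioc p M, ∑ q ∈ Ioc p N, f q N := by
  apply sum_comm'
  intro q N; simp; omega

lemma Icc_ins (p M : ℕ) (h : p ≤ M) : Icc p M = insert p (Ioc p M) := by
  ext; simp; omega

lemma kk_sum (M s p : ℕ) (h : p ≤ M) (f : ℕ → ℝ) : ∑ N ∈ Icc p M, kk M (s+1) p N * f N =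
    ∑ N ∈ Ioc p M, (∑ q ∈ Ioc p N, kk M s q N) / ((N:ℝ) - p) * (f p - f N) := by
  rw [Icc_ins p M h, sum_insert (by simp)]
  simp only [mul_sub, sum_sub_distrib]
  rw [kk, if_pos rfl, sum_mul, sub_eq_add_neg, ← sum_neg_distrib]
  congr 1
  refine sum_congr rfl fun N hN => ?_
  simp at hN
  rw [kk, if_neg (by omega)]; ring

lemma geom_id (a b : ℝ) (ha : a ≠ 0) (hb : b ≠ 0) (hab : b - a ≠ 0) (d : ℕ) :
    ∑ j ∈ range (d+1), (a^(j+1))⁻¹ * (b^(d-j+1))⁻¹ = ((a^(d+1))⁻¹ - (b^(d+1))⁻¹) / (b - a) := by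
  induction d with
  | zero => simp; field_simp
  | succ d ih =>
    rw [sum_range_succ]
    have : ∑ j ∈ range (d+1), (a^(j+1))⁻¹ * (b^(d+1-j+1))⁻¹ =
       b⁻¹ * ∑ j ∈ range (d+1), (a^(j+1))⁻¹ * (b^(d-j+1))⁻¹ := by
      rw [mul_sum]
      refine sum_congr rfl fun j hj => ?_
      simp at hj
      rw [show d + 1 - j + 1 = (d-j+1)+1 by omega, pow_succ b (d-j+1), mul_inv]; ring
    rw [this, ih]
    simp
    field_simp
    try ring

lemma Qd_eq (M s d p : ℕ) (hp : 1 ≤ p) (h : p ≤ M) :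
    Qd M s d p = ∑ N ∈ Icc p M, kk M s p N * ((N:ℝ)^(d+1))⁻¹ := by
  induction s generalizing d p with
  | zero =>
    rw [sum_eq_single p]
    · simp [kk, Qd, pow_succ]
    · intro N _ hN; simp [kk, hN.symm]
    · simp; omega
  | succ s ih =>
    rw [kk_sum M s p h, Qd]
    calc _ = ∑ j ∈ range (d+1), ∑ N ∈ Ioc p M, (∑ q ∈ Ioc p N, kk M s q N) *
          (((p:ℝ)^(j+1))⁻¹ * ((N:ℝ)^(d-j+1))⁻¹) := by
          refine sum_congr rfl fun j _ => ?_
          have : ∀ q ∈ Ioc p M, Qd M s (d-j) q = _ := fun q hq => by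
            simp at hq; exact ih (d-j) q (by omega) (by omega)
          rw [sum_congr rfl this, Ioc_swap, mul_sum]
          refine sum_congr rfl fun N _ => ?_
          rw [← sum_mul]; ring
      _ = _ := by
        rw [sum_comm]
        refine sum_congr rfl fun N hN => ?_
        simp at hN
        have h1 : (p:ℝ) < N := by exact_mod_cast hN.1
        have h2 : (0:ℝ) < p := by exact_mod_cast hp
        rw [← mul_sum, geom_id _ _ h2.ne' (by linarith) (by linarith)]; ring

lemma ww_eq (M y s p : ℕ) (hp : y < p) (h : p ≤ M) :
    ww M y s p = ∑ N ∈ Icc p M, kk M s p N * ((N:ℝ) - y)⁻¹ := by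
  induction s generalizing p with
  | zero =>
    rw [sum_eq_single p]
    · simp [kk, ww]; ring
    · intro N _ hN; simp [kk, hN.symm]
    · simp; omega
  | succ s ih =>
    rw [kk_sum M s p h, ww]
    have : ∀ q ∈ Ioc p M, ww M y s q = _ := fun q hq => by
            simp at hq; exact ih q (by omega) (by omega)
    rw [sum_congr rfl this, Ioc_swap, mul_sum]
    refine sum_congr rfl fun N hN => ?_
    rw [← sum_mul]
    simp at hN
    have h1 : (p:ℝ) < N := by exact_mod_cast hN.1
    have h2 : (y:ℝ) < p := by exact_mod_cast hp
    have h3 : (N:ℝ) - p ≠ 0 := by linarith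
    have h4 : (N:ℝ) - y ≠ 0 := by linarith
    have h5 : (p:ℝ) - y ≠ 0 := by linarith
    field_simp
    ring

lemma kk_diag (M s p : ℕ) : kk M (s+1) p p = ∑ q ∈ Ioc p M, ww M p s q := by
  rw [kk, if_pos rfl]
  have : ∀ q ∈ Ioc p M, ww M p s q = _ := fun q hq => by
            simp at hq; exact ww_eq M p s q (by omega) (by omega)
  rw [sum_congr rfl this, Ioc_swap]
  refine sum_congr rfl fun N hN => ?_
  rw [← sum_mul]; rfl

lemma ww_step (M p s j : ℕ) : ∑ q ∈ Ioc p M, ee j (q - p - 1) * ww M p (s+1) q =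
    ∑ q ∈ Ioc p M, ee (j+1) (q - p - 1) * ww M p s q := by
  simp only [ww, mul_sum]
  rw [sum_comm' (t' := Ioc p M) (s' := fun q => Ioo p q)]
  · refine sum_congr rfl fun q hq => ?_
    simp at hq
    rw [ee, sum_mul]
    refine sum_bij' (fun a _ => a - p - 1) (fun b _ => b + p + 1) ?_ ?_ ?_ ?_ ?_
    · intro a ha; simp at ha ⊢; omega
    · intro a ha; simp at ha ⊢; omega
    · intro a ha; simp at ha ⊢; omega
    · intro a ha; simp at ha ⊢; omega
    · intro a ha
      simp at ha
      have : ((a - p - 1 : ℕ):ℝ) + 1 = a - p := by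
        rw [Nat.sub_sub, Nat.cast_sub (by omega)]; push_cast; ring
      rw [this]; ring
  · intro a b; simp; omega

lemma ww_sum (M p s j : ℕ) : ∑ q ∈ Ioc p M, ee j (q - p - 1) * ww M p s q =
    ∑ q ∈ Ioc p M, ee (j+s) (q - p - 1) * ww M p 0 q := by
  induction s generalizing j with
  | zero => rfl
  | succ s ih => rw [ww_step, ih, show j + 1 + s = j + (s+1) by ring]

lemma kk_diag_lim (s p : ℕ) (hp : 1 ≤ p) :
    Filter.Tendsto (fun M => kk M s p p) Filter.atTop (nhds (hh s p / p)) := by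
  cases s with
  | zero => simp [kk, hh]
  | succ s =>
    have h := (tail_lim s p).div_const (p:ℝ)
    have h2 := h.comp (Filter.tendsto_sub_atTop_nat p)
    refine h2.congr fun M => ?_
    have h3 := ww_sum M p s 0
    simp only [ee, one_mul, zero_add] at h3
    rw [kk_diag, h3, Function.comp, sum_div]
    refine sum_bij' (fun b _ => b + p + 1) (fun a _ => a - p - 1) ?_ ?_ ?_ ?_ ?_
    · intro a ha; simp at ha ⊢; omega
    · intro a ha; simp at ha ⊢; omega
    · intro a ha; simp at ha ⊢; try omega
    · intro a ha; simp at ha ⊢; omega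
    · intro a ha
      have : a + p + 1 - p - 1 = a := by omega
      rw [this, ww]
      push_cast
      have h1 : (0:ℝ) < p := by exact_mod_cast hp
      have h2 : (a:ℝ) + p + 1 - p = a + 1 := by ring
      rw [h2]
      field_simp
      ring

/-- generating function in `s` -/
noncomputable def kz (M p N : ℕ) : PowerSeries ℝ := PowerSeries.mk fun s => kk M s p N

lemma kz_eq (M p j : ℕ) : kz M p (p + j) = Pz j * kz M (p+j) (p+j) := by
  induction j using Nat.strong_induction_on generalizing p with
  | _ j ih =>
  cases j with
  | zero => simp [Pz]
  | succ j =>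
    have h1 : PowerSeries.C ((j:ℝ)+1) * kz M p (p + (j+1)) =
        - PowerSeries.X * ∑ q ∈ Ioc p (p+(j+1)), kz M q (p+(j+1)) := by
      ext s
      rw [PowerSeries.coeff_C_mul, neg_mul, map_neg]
      cases s with
      | zero => simp [kz, kk]
      | succ s =>
        rw [PowerSeries.coeff_succ_X_mul, map_sum]
        simp only [kz, PowerSeries.coeff_mk]
        rw [kk, if_neg (by omega)]
        push_cast
        have : (p:ℝ) + (j+1) - p = j+1 := by ring
        rw [this]
        field_simp
    have h2 : ∑ q ∈ Ioc p (p+(j+1)), kz M q (p+(j+1)) =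
       (∑ l ∈ range (j+1), Pz l) * kz M (p+(j+1)) (p+(j+1)) := by
      rw [sum_mul]
      refine sum_bij' (fun a _ => p + (j+1) - a) (fun b _ => p + (j+1) - b) ?_ ?_ ?_ ?_ ?_
      · intro a ha; simp at ha ⊢; omega
      · intro a ha; simp at ha ⊢; omega
      · intro a ha; simp at ha ⊢; omega
      · intro a ha; simp at ha ⊢; omega
      · intro a ha
        simp at ha
        have := ih (p + (j+1) - a) (by omega) a
        rwa [show a + (p + (j+1) - a) = p + (j+1) by omega] at this
    have h3 := Pz_sum (j+1)
    have h4 : PowerSeries.C ((j:ℝ)+1)⁻¹ * PowerSeries.C ((j:ℝ)+1) = 1 := by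
      rw [← map_mul, inv_mul_cancel₀ (by positivity), map_one]
    have h5 : PowerSeries.C ((j:ℝ)+1) * kz M p (p + (j+1)) =
      PowerSeries.C ((j:ℝ)+1) * (Pz (j+1) * kz M (p+(j+1)) (p+(j+1))) := by
      push_cast at h3
      rw [h1, h2, ← mul_assoc, ← mul_assoc, h3]
    calc _ = PowerSeries.C ((j:ℝ)+1)⁻¹ * (PowerSeries.C ((j:ℝ)+1) * kz M p (p + (j+1))) := by
          rw [← mul_assoc, h4, one_mul]
      _ = _ := by rw [h5, ← mul_assoc, h4, one_mul]

/-! ### sums over tuples -/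

def Tr (n L : ℕ) : Finset (Fin n → ℕ) :=
  (Fintype.piFinset fun _ : Fin n => range L).filter fun mv => ∑ i, (mv i + 1) ≤ L

lemma mem_Tr {n L : ℕ} (mv : Fin n → ℕ) : mv ∈ Tr n L ↔ ∑ i, (mv i + 1) ≤ L := by
  simp only [Tr, mem_filter, Fintype.mem_piFinset, mem_range, and_iff_right_iff_imp]
  intro h i
  have := single_le_sum (f := fun i => mv i + 1) (fun i _ => Nat.zero_le _) (mem_univ i)
  omega

lemma sum_Tr_succ {B : Type*} [AddCommMonoid B] (n M q : ℕ) (f : (Fin (n+1) → ℕ) → B) :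
    ∑ mv ∈ Tr (n+1) (M - q), f mv =
      ∑ p ∈ Ioc q M, ∑ mv ∈ Tr n (M - p), f (Fin.cons (p - q - 1) mv) := by
  rw [sum_sigma']
  refine sum_bij' (fun mv _ => (⟨q + mv 0 + 1, Fin.tail mv⟩ : (_ : ℕ) × (Fin n → ℕ)))
    (fun x _ => Fin.cons (x.1 - q - 1) x.2) ?_ ?_ ?_ ?_ ?_
  · intro mv h
    rw [mem_Tr, Fin.sum_univ_succ] at h
    simp only [mem_sigma, mem_Ioc, mem_Tr, Fin.tail]
    omega
  · rintro ⟨p, mv⟩ h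
    simp only [mem_sigma, mem_Ioc, mem_Tr] at h
    rw [mem_Tr, Fin.sum_univ_succ]
    simp only [Fin.cons_zero, Fin.cons_succ]
    omega
  · intro mv h
    have : q + mv 0 + 1 - q - 1 = mv 0 := by omega
    simp [this]
  · rintro ⟨p, mv⟩ h
    simp only [mem_sigma, mem_Ioc, mem_Tr] at h
    have : q + (p - q - 1) + 1 = p := by omega
    simp [this]
  · intro mv h
    have : q + mv 0 + 1 - q - 1 = mv 0 := by omega
    simp [this]

lemma PS_cons {n : ℕ} (a : ℕ) (mv : Fin n → ℕ) (j : ℕ) :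
    PS (Fin.cons a mv : Fin (n+1) → ℕ) (j+1) = a + 1 + PS mv j := by
  simp only [PS, sum_filter]
  rw [Fin.sum_univ_succ]
  simp

lemma PS_zero {n : ℕ} (mv : Fin n → ℕ) : PS mv 0 = 0 := by simp [PS]

noncomputable def term {n : ℕ} (q : ℕ) (kv mv : Fin n → ℕ) : ℝ :=
  (∏ i : Fin n, ((q + PS mv ((i:ℕ) + 1) : ℕ) : ℝ) ^ kv i)⁻¹

lemma term_cons {n : ℕ} (q p : ℕ) (h : q < p) (kv : Fin (n+1) → ℕ) (mv : Fin n → ℕ) :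
    term q kv (Fin.cons (p - q - 1) mv) = ((p:ℝ) ^ (kv 0))⁻¹ * term p (Fin.tail kv) mv := by
  rw [term, Fin.prod_univ_succ, mul_inv, term]
  congr 2
  · simp only [Fin.val_zero]
    rw [PS_cons, PS_zero, show q + (p - q - 1 + 1 + 0) = p by omega]
  · refine prod_congr rfl fun i _ => ?_
    rw [Fin.val_succ, PS_cons, Fin.tail, show q + (p - q - 1 + 1 + PS mv (i+1)) = p + PS mv (i+1) by omega]

lemma mem_Ikr {n k r : ℕ} (kv : Fin n → ℕ) : kv ∈ Ikr n k r ↔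
    (∀ i, 1 ≤ kv i) ∧ (∀ i : Fin n, (i : ℕ) = n - 1 → 2 ≤ kv i) ∧
      (∑ i, kv i) = k ∧ ∀ i : Fin n, (i : ℕ) + 2 ≤ r → kv i = 1 := by
  simp only [Ikr, mem_filter, Fintype.mem_piFinset, mem_range, and_iff_right_iff_imp]
  rintro ⟨-, -, h, -⟩ i
  have := single_le_sum (f := fun i => kv i) (fun i _ => Nat.zero_le _) (mem_univ i)
  omega

lemma mem_Ikr_succ {n k r : ℕ} (kv : Fin (n+2) → ℕ) : kv ∈ Ikr (n+2) k r ↔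
    1 ≤ kv 0 ∧ kv 0 ≤ k ∧ (2 ≤ r → kv 0 = 1) ∧ Fin.tail kv ∈ Ikr (n+1) (k - kv 0) (r-1) := by
  rw [mem_Ikr, mem_Ikr, Fin.forall_fin_succ (P := fun i => 1 ≤ kv i),
    Fin.forall_fin_succ (P := fun i => (i:ℕ) = n + 2 - 1 → 2 ≤ kv i), Fin.sum_univ_succ,
    Fin.forall_fin_succ (P := fun i => (i:ℕ) + 2 ≤ r → kv i = 1)]
  simp only [Fin.val_zero, Fin.val_succ, Fin.tail]
  constructor
  · rintro ⟨⟨h1, h2⟩, ⟨_, h4⟩, h5, h6, h7⟩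
    refine ⟨h1, by omega, by simpa using h6, h2, fun i hi => h4 i (by omega), by omega,
      fun i hi => h7 i (by omega)⟩
  · rintro ⟨h1, h2, h3, h4, h5, h6, h7⟩
    refine ⟨⟨h1, h4⟩, ⟨by omega, fun i hi => h5 i (by omega)⟩, by omega, by simpa using h3,
      fun i hi => h7 i (by omega)⟩

lemma Ikr_le {n k r : ℕ} (kv : Fin (n+1) → ℕ) (h : kv ∈ Ikr (n+1) k r) : n + 2 ≤ k := by
  rw [mem_Ikr] at h
  obtain ⟨h1, h2, h3, -⟩ := h
  rw [Fin.sum_univ_castSucc] at h3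
  have h4 := h2 (Fin.last n) (by simp)
  have h5 : ∑ i : Fin n, 1 ≤ ∑ i : Fin n, kv i.castSucc := sum_le_sum fun i _ => h1 _
  simp at h5
  omega

lemma sum_Ikr_one {B : Type*} [AddCommMonoid B] (n d r : ℕ) (hr : 1 ≤ r)
    (f : (Fin (n+2) → ℕ) → B) :
    ∑ kv ∈ Ikr (n+2) (d+n+3) (r+1), f kv = ∑ kv ∈ Ikr (n+1) (d+n+2) r, f (Fin.cons 1 kv) := by
  refine sum_bij' (fun kv _ => Fin.tail kv) (fun kv _ => Fin.cons 1 kv) ?_ ?_ ?_ ?_ ?_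
  · intro kv h
    rw [mem_Ikr_succ] at h
    obtain ⟨h1, h2, h3, h4⟩ := h
    rw [h3 (by omega)] at h4
    simpa using h4
  · intro kv h
    rw [mem_Ikr_succ]
    simpa using h
  · intro kv h
    rw [mem_Ikr_succ] at h
    have hc : (Fin.cons 1 (Fin.tail kv) : Fin (n+2) → ℕ) = kv := by
      have h1 := h.2.2.1 (by omega)
      have h2 := Fin.cons_self_tail kv
      rwa [h1] at h2
    exact hc
  · intro kv h; simp
  · intro kv h
    rw [mem_Ikr_succ] at h
    have hc : (Fin.cons 1 (Fin.tail kv) : Fin (n+2) → ℕ) = kv := by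
      have h1 := h.2.2.1 (by omega)
      have h2 := Fin.cons_self_tail kv
      rwa [h1] at h2
    rw [hc]

lemma sum_Ikr_free {B : Type*} [AddCommMonoid B] (n d : ℕ) (f : (Fin (n+2) → ℕ) → B) :
    ∑ kv ∈ Ikr (n+2) (d+n+3) 1, f kv =
      ∑ j ∈ range (d+1), ∑ kv ∈ Ikr (n+1) (d-j+n+2) 1, f (Fin.cons (j+1) kv) := by
  have h01 : ∀ (n k), Ikr n k 0 = Ikr n k 1 := by
    intro n k; ext kv; simp [mem_Ikr]
  rw [sum_sigma']
  refine sum_bij' (fun kv _ => (⟨kv 0 - 1, Fin.tail kv⟩ : (_ : ℕ) × (Fin (n+1) → ℕ)))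
    (fun x _ => Fin.cons (x.1 + 1) x.2) ?_ ?_ ?_ ?_ ?_
  · intro kv h
    rw [mem_Ikr_succ] at h
    obtain ⟨h1, h2, h3, h4⟩ := h
    have h5 := Ikr_le _ h4
    simp only [mem_sigma, mem_range]
    refine ⟨by omega, ?_⟩
    rw [show d - (kv 0 - 1) + n + 2 = d + n + 3 - kv 0 by omega, ← h01]
    exact h4
  · rintro ⟨j, kv⟩ h
    simp only [mem_sigma, mem_range] at h
    obtain ⟨h1, h2⟩ := h
    rw [mem_Ikr_succ]
    simp only [Fin.cons_zero, Fin.tail_cons]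
    refine ⟨by omega, by omega, by omega, ?_⟩
    rw [show d + n + 3 - (j+1) = d - j + n + 2 by omega, h01]
    exact h2
  · intro kv h
    rw [mem_Ikr_succ] at h
    have : kv 0 - 1 + 1 = kv 0 := by omega
    simp [this]
  · rintro ⟨j, kv⟩ h; simp
  · intro kv h
    rw [mem_Ikr_succ] at h
    have : kv 0 - 1 + 1 = kv 0 := by omega
    simp [this]

lemma Ikr_base (k : ℕ) (hk : 2 ≤ k) : Ikr 1 k 1 = {fun _ => k} := by
  ext kv
  rw [mem_Ikr]
  simp
  constructor
  · rintro ⟨_, _, h⟩; ext i; rw [← h]; congr 1; exact Subsingleton.elim _ _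
  · rintro rfl; simp; omega

lemma Qd_tuple (M n d p : ℕ) : ∑ kv ∈ Ikr (n+1) (d+n+2) 1, ∑ mv ∈ Tr n (M - p),
    ((p:ℝ) ^ (kv 0))⁻¹ * term p (Fin.tail kv) mv = Qd M n d p := by
  induction n generalizing d p with
  | zero =>
    rw [Ikr_base _ (by omega)]
    have : Tr 0 (M-p) = {0} := by
      ext mv; rw [mem_Tr]; simp; exact Subsingleton.elim _ _
    simp [this, term, Qd]
  | succ n ih =>
    rw [show d + (n+1) + 2 = d + n + 3 by ring, sum_Ikr_free, Qd]
    refine sum_congr rfl fun j _ => ?_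
    simp only [Fin.cons_zero, Fin.tail_cons, ← mul_sum]
    congr 1
    rw [← sum_congr rfl (fun q _ => ih (d-j) q)]
    conv_rhs => rw [sum_comm]
    refine sum_congr rfl fun kv _ => ?_
    rw [sum_Tr_succ]
    refine sum_congr rfl fun q hq => ?_
    refine sum_congr rfl fun mv _ => ?_
    simp at hq
    rw [term_cons p q hq.1]

lemma sum_finset_succ {B : Type*} [AddCommMonoid B] (n : ℕ) (F : Finset (Fin (n+1)) → B) :
    ∑ J : Finset (Fin (n+1)), F J = ∑ J : Finset (Fin n),
      (F (J.map (Fin.succEmb n)) + F (insert 0 (J.map (Fin.succEmb n)))) := by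
  rw [← powerset_univ, Fin.univ_succ, cons_eq_insert, sum_powerset_insert (by simp),
    ← sum_add_distrib]
  symm
  refine sum_bij (fun J _ => J.map (Fin.succEmb n)) ?_ ?_ ?_ ?_
  · intro J _
    simp only [mem_powerset]
    exact map_subset_map.2 (subset_univ _)
  · intro J _ J' _ h; exact map_injective _ h
  · intro t ht
    rw [mem_powerset] at ht
    obtain ⟨u, -, rfl⟩ := subset_map_iff.1 ht
    exact ⟨u, mem_univ _, rfl⟩
  · intro J _; rfl

open Polynomial in
noncomputable def wJ (M n d q : ℕ) (J : Finset (Fin n)) : ℝ[X] :=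
  ∑ kv ∈ Ikr n (d+n+1) (J.sup fun j => (j : ℕ) + 1), ∑ mv ∈ Tr n (M - q),
    Polynomial.C (term q kv mv) * Polynomial.X ^ (∑ j ∈ J, (mv j + 1))

open Polynomial in
noncomputable def Ps (M n d q : ℕ) : ℝ[X] :=
  ∑ J : Finset (Fin n), if J.Nonempty then (-1) ^ (J.card - 1) * wJ M n d q J else 0

lemma sup_succ {n : ℕ} (J : Finset (Fin n)) (hJ : J.Nonempty) :
    ((J.map (Fin.succEmb n)).sup fun j => (j:ℕ) + 1) = (J.sup fun j => (j:ℕ)+1) + 1 := by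
  rw [sup_map]
  apply le_antisymm
  · apply Finset.sup_le
    intro j hj
    have := le_sup (f := fun j : Fin n => (j:ℕ)+1) hj
    simpa using this
  · obtain ⟨j, hj, h⟩ := exists_mem_eq_sup J hJ (fun j : Fin n => (j:ℕ)+1)
    rw [h]
    have := le_sup (f := (fun j : Fin (n+1) => (j:ℕ)+1) ∘ (Fin.succEmb n)) hj
    simpa using this

lemma one_le_sup {n : ℕ} (J : Finset (Fin n)) (hJ : J.Nonempty) :
    1 ≤ (J.sup fun j => (j:ℕ)+1) := by
  obtain ⟨j, hj⟩ := hJ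
  have := le_sup (f := fun j : Fin n => (j:ℕ)+1) hj
  omega

lemma wJ_zero (M n d q : ℕ) : wJ M (n+1) d q {0} =
    ∑ p ∈ Ioc q M, Polynomial.X ^ (p - q) * Polynomial.C (Qd M n d p) := by
  rw [wJ]
  simp only [sup_singleton, sum_singleton, Fin.val_zero, zero_add]
  rw [show d + (n+1) + 1 = d+n+2 by ring]
  simp only [sum_Tr_succ]
  rw [sum_comm]
  refine sum_congr rfl fun p hp => ?_
  simp at hp
  rw [← Qd_tuple, map_sum, mul_sum]
  refine sum_congr rfl fun kv _ => ?_
  rw [map_sum, mul_sum]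
  refine sum_congr rfl fun mv _ => ?_
  rw [term_cons q p hp.1, Fin.cons_zero, show p - q - 1 + 1 = p - q by omega, mul_comm]

lemma wJ_map (M n d q : ℕ) (J : Finset (Fin n)) (hJ : J.Nonempty) :
    wJ M (n+1) d q (J.map (Fin.succEmb n)) =
    ∑ p ∈ Ioc q M, Polynomial.C ((p:ℝ)⁻¹) * wJ M n d p J := by
  obtain ⟨n, rfl⟩ : ∃ n', n = n' + 1 := by
    obtain ⟨j, -⟩ := hJ
    exact ⟨n - 1, by have := j.2; omega⟩
  rw [wJ, sup_succ J hJ, show d + (n+1+1) + 1 = d+n+3 by ring, sum_Ikr_one _ _ _ (one_le_sup J hJ)]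
  rw [sum_congr rfl fun kv _ => sum_Tr_succ _ _ _ _, sum_comm]
  refine sum_congr rfl fun p hp => ?_
  simp at hp
  rw [wJ, mul_sum, show d + (n+1) + 1 = d+n+2 by ring]
  refine sum_congr rfl fun kv _ => ?_
  rw [mul_sum]
  refine sum_congr rfl fun mv _ => ?_
  rw [term_cons q p hp.1]
  simp [mul_assoc]

lemma wJ_insert (M n d q : ℕ) (J : Finset (Fin n)) (hJ : J.Nonempty) :
    wJ M (n+1) d q (insert 0 (J.map (Fin.succEmb n))) =
    ∑ p ∈ Ioc q M, Polynomial.X ^ (p-q) * (Polynomial.C ((p:ℝ)⁻¹) * wJ M n d p J) := by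
  obtain ⟨n, rfl⟩ : ∃ n', n = n' + 1 := by
    obtain ⟨j, -⟩ := hJ
    exact ⟨n - 1, by have := j.2; omega⟩
  rw [wJ, sup_insert, sup_succ J hJ, sup_eq_right.2 (by simp),
    show d + (n+1+1) + 1 = d+n+3 by ring, sum_Ikr_one _ _ _ (one_le_sup J hJ)]
  rw [sum_congr rfl fun kv _ => sum_Tr_succ _ _ _ _, sum_comm]
  refine sum_congr rfl fun p hp => ?_
  simp at hp
  rw [wJ, mul_sum, mul_sum, show d + (n+1) + 1 = d+n+2 by ring]
  refine sum_congr rfl fun kv _ => ?_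
  rw [mul_sum, mul_sum]
  refine sum_congr rfl fun mv _ => ?_
  rw [term_cons q p hp.1, sum_insert (by simp)]
  simp only [Fin.cons_zero]
  rw [show p - q - 1 + 1 = p - q by omega]
  simp [pow_add]
  ring

lemma Ps_succ (M n d q : ℕ) : Ps M (n+1) d q = ∑ p ∈ Ioc q M,
    (Polynomial.X ^ (p - q) * Polynomial.C (Qd M n d p) +
      (1 - Polynomial.X ^ (p - q)) * (Polynomial.C ((p:ℝ)⁻¹) * Ps M n d p)) := by
  rw [Ps, sum_finset_succ, sum_add_distrib (s := Ioc q M), ← wJ_zero]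
  have h : ∀ J : Finset (Fin n),
      ((if (J.map (Fin.succEmb n)).Nonempty then (-1) ^ ((J.map (Fin.succEmb n)).card - 1) *
        wJ M (n+1) d q (J.map (Fin.succEmb n)) else 0) +
      (if (insert 0 (J.map (Fin.succEmb n))).Nonempty then
        (-1) ^ ((insert 0 (J.map (Fin.succEmb n))).card - 1) *
        wJ M (n+1) d q (insert 0 (J.map (Fin.succEmb n))) else 0)) =
      (if J = ∅ then wJ M (n+1) d q {0} else 0) +
      ∑ p ∈ Ioc q M, (1 - Polynomial.X ^ (p - q)) * (Polynomial.C ((p:ℝ)⁻¹) * 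
        (if J.Nonempty then (-1) ^ (J.card - 1) * wJ M n d p J else 0)) := by
    intro J
    rcases J.eq_empty_or_nonempty with rfl | hJ
    · simp
    · rw [if_pos (by simpa using hJ), if_pos (insert_nonempty _ _), if_neg hJ.ne_empty,
        card_insert_of_notMem (by simp), card_map, wJ_map _ _ _ _ _ hJ, wJ_insert _ _ _ _ _ hJ,
        zero_add, mul_sum, mul_sum, ← sum_add_distrib]
      refine sum_congr rfl fun p _ => ?_
      rw [if_pos hJ]
      obtain ⟨c, hc⟩ : ∃ c, J.card = c + 1 := ⟨J.card - 1, by have := hJ.card_pos; omega⟩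
      rw [hc]
      simp only [Nat.add_sub_cancel, pow_succ]
      ring
  rw [sum_congr rfl fun J _ => h J, sum_add_distrib, sum_comm]
  congr 1
  · simp
  · refine sum_congr rfl fun p _ => ?_
    rw [Ps, mul_sum, mul_sum]

/-! ### assembly -/

open Polynomial in
lemma Ps_gen (M d : ℕ) :
    (PowerSeries.mk fun n => Ps M n d 0 : PowerSeries ℝ[X]) = ∑ N ∈ Ioc 0 M,
      PowerSeries.map (Polynomial.C) (PowerSeries.C ((N:ℝ)^(d+1))⁻¹ * kz M N N) *
        (PowerSeries.X * (PowerSeries.C Polynomial.X) ^ N *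
          PowerSeries.map (Polynomial.C) (Ez N)) := by
  have hal : ∀ c : ℝ, algebraMap ℝ (PowerSeries ℝ[X]) c = PowerSeries.C (Polynomial.C c) := by
    intro c; rw [PowerSeries.algebraMap_apply]; rfl
  have h := total_head (A := PowerSeries ℝ[X]) (PowerSeries.C Polynomial.X) PowerSeries.X
    (fun j => PowerSeries.map (Polynomial.C) (Pz j)) (by simp [Pz]) ?_ M
    (fun q => PowerSeries.mk fun n => Ps M n d q)
    (fun p => PowerSeries.mk fun s => Polynomial.C (Qd M s d p))
    (fun N => PowerSeries.map (Polynomial.C) (PowerSeries.C ((N:ℝ)^(d+1))⁻¹ * kz M N N)) ?_ ?_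
  · rw [h]
    refine sum_congr rfl fun N _ => ?_
    rw [Ez, map_sum]
  · intro j
    have := congrArg (PowerSeries.map (Polynomial.C : ℝ →+* ℝ[X])) (Pz_sum j)
    simpa using this
  · intro q hq
    ext1 n
    cases n with
    | zero =>
      rw [PowerSeries.coeff_mk, Ps, Fintype.sum_eq_zero]
      · simp
      · intro J; rw [if_neg]; rintro ⟨j, -⟩; exact j.elim0
    | succ n =>
      rw [PowerSeries.coeff_mk, Ps_succ, PowerSeries.coeff_succ_X_mul, map_sum]
      refine sum_congr rfl fun p _ => ?_
      rw [hal, ← map_pow, ← map_one (PowerSeries.C (R := ℝ[X])), ← map_sub, map_add,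
        PowerSeries.coeff_C_mul, PowerSeries.coeff_C_mul, PowerSeries.coeff_C_mul,
        PowerSeries.coeff_mk, PowerSeries.coeff_mk]
  · intro p hp
    simp only [mem_Ioc] at hp
    ext1 s
    rw [PowerSeries.coeff_mk, Qd_eq M s d p (by omega) (by omega), map_sum, map_sum]
    refine sum_congr rfl fun N hN => ?_
    simp only [mem_Icc] at hN
    have h1 := kz_eq M p (N - p)
    rw [show p + (N - p) = N by omega] at h1
    rw [← map_mul, mul_left_comm, ← h1, PowerSeries.coeff_map, PowerSeries.coeff_C_mul, kz,
      PowerSeries.coeff_mk, mul_comm]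

lemma Ps_coeff (M n d m : ℕ) (hm : 1 ≤ m) (hM : m ≤ M) :
    (Ps M (n+1) d 0).coeff m = ((m:ℝ)^(d+1))⁻¹ * PowerSeries.coeff n (kz M m m * Ez m) := by
  have h := congrArg (PowerSeries.coeff (n+1)) (Ps_gen M d)
  rw [PowerSeries.coeff_mk, map_sum] at h
  rw [h, Polynomial.finsetSum_coeff]
  have : ∀ N ∈ Ioc 0 M, (PowerSeries.coeff (n+1)
      (PowerSeries.map (Polynomial.C) (PowerSeries.C ((N:ℝ)^(d+1))⁻¹ * kz M N N) *
        (PowerSeries.X * (PowerSeries.C Polynomial.X) ^ N *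
          PowerSeries.map (Polynomial.C) (Ez N)))).coeff m =
      if N = m then ((m:ℝ)^(d+1))⁻¹ * PowerSeries.coeff n (kz M m m * Ez m) else 0 := by
    intro N _
    have e : (PowerSeries.map (Polynomial.C) (PowerSeries.C ((N:ℝ)^(d+1))⁻¹ * kz M N N) *
        (PowerSeries.X * (PowerSeries.C Polynomial.X) ^ N *
          PowerSeries.map (Polynomial.C) (Ez N))) = PowerSeries.X * (PowerSeries.C (Polynomial.X ^ N) *
          PowerSeries.map (Polynomial.C) (PowerSeries.C ((N:ℝ)^(d+1))⁻¹ * (kz M N N * Ez N))) := by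
      simp only [map_mul, map_pow]; ring
    rw [e, PowerSeries.coeff_succ_X_mul, PowerSeries.coeff_C_mul, PowerSeries.coeff_map,
      PowerSeries.coeff_C_mul, mul_comm, Polynomial.coeff_C_mul, Polynomial.coeff_X_pow]
    by_cases hN : N = m
    · subst hN; simp
    · rw [if_neg hN, if_neg (Ne.symm hN), mul_zero]
  rw [sum_congr rfl this, sum_ite_eq', if_pos (by simp; omega)]

lemma Ps_lim (n d m : ℕ) (hm : 1 ≤ m) :
    Filter.Tendsto (fun M => (Ps M (n+1) d 0).coeff m) Filter.atTop
      (nhds (1 / (m:ℝ)^(d+n+2))) := by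
  have h1 : Filter.Tendsto (fun M => ((m:ℝ)^(d+1))⁻¹ * PowerSeries.coeff n (kz M m m * Ez m))
      Filter.atTop (nhds (((m:ℝ)^(d+1))⁻¹ *
        ∑ x ∈ antidiagonal n, (hh x.1 m / m) * PowerSeries.coeff x.2 (Ez m))) := by
    apply Filter.Tendsto.const_mul
    simp only [PowerSeries.coeff_mul]
    apply tendsto_finsetSum
    intro x _
    apply Filter.Tendsto.mul_const
    simp only [kz, PowerSeries.coeff_mk]
    exact kk_diag_lim _ _ hm
  have h2 : ((m:ℝ)^(d+1))⁻¹ *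
        ∑ x ∈ antidiagonal n, (hh x.1 m / m) * PowerSeries.coeff x.2 (Ez m) = 1 / (m:ℝ)^(d+n+2) := by
    have h3 : ∑ x ∈ antidiagonal n, (hh x.1 m / m) * PowerSeries.coeff x.2 (Ez m) =
        (m:ℝ)⁻¹ * PowerSeries.coeff n (Hz m * Ez m) := by
      rw [PowerSeries.coeff_mul, mul_sum]
      refine sum_congr rfl fun x _ => ?_
      simp only [Hz, PowerSeries.coeff_mk]; ring
    obtain ⟨N, rfl⟩ : ∃ N, m = N + 1 := ⟨m - 1, by omega⟩
    have h4 := Hz_Ez_coeff N n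
    rw [h3, h4, inv_pow]
    push_cast
    rw [show d + n + 2 = (d+1) + 1 + n by ring, pow_add, pow_add]
    field_simp
    ring
  rw [h2] at h1
  refine h1.congr' ?_
  filter_upwards [Filter.eventually_ge_atTop m] with M hM
  rw [Ps_coeff M n d m hm hM]

lemma summable_prod_pi (g : ℕ → ℝ) (hg : Summable g) (h0 : ∀ a, 0 ≤ g a) (n : ℕ) :
    Summable fun mv : Fin n → ℕ => ∏ i, g (mv i) := by
  induction n with
  | zero => exact Summable.of_finite
  | succ n ih =>
    rw [← (Fin.consEquiv (fun _ : Fin (n+1) => ℕ)).summable_iff]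
    have := hg.mul_of_nonneg ih (fun a => h0 a) (fun mv => prod_nonneg fun i _ => h0 _)
    refine this.congr fun x => ?_
    simp [Fin.prod_univ_succ, Fin.consEquiv]

lemma le_PS {n : ℕ} (mv : Fin n → ℕ) (i : Fin n) (j : ℕ) (h : (i:ℕ) < j) :
    mv i + 1 ≤ PS mv j := by
  rw [PS]
  exact single_le_sum (f := fun i => mv i + 1) (fun i _ => Nat.zero_le _) (by simp [h])

lemma term_summable (n k r : ℕ) (kv : Fin (n+1) → ℕ) (h : kv ∈ Ikr (n+1) k r) :
    Summable fun mv : Fin (n+1) → ℕ => term 0 kv mv := by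
  have hg : Summable fun a : ℕ => (((a:ℝ)+1) ^ (1 + 1/((n:ℝ)+1)))⁻¹ := by
    have h1 := (Real.summable_nat_rpow_inv (p := 1 + 1/((n:ℝ)+1))).2 (by
      have : 0 < 1/((n:ℝ)+1) := by positivity
      linarith)
    have := (summable_nat_add_iff 1).2 h1
    simpa using this
  have hs := summable_prod_pi _ hg (fun a => by positivity) (n+1)
  refine Summable.of_nonneg_of_le (fun mv => ?_) (fun mv => ?_) hs
  · rw [term]; positivity
  · rw [term, prod_inv_distrib]
    rw [mem_Ikr] at h
    obtain ⟨h1, h2, -, -⟩ := h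
    have hpos : ∀ i : Fin (n+1), (mv i : ℝ) + 1 ≤ PS mv (i+1) := fun i => by
      exact_mod_cast le_PS mv i _ (by omega)
    have hpos' : ∀ i : Fin (n+1), (mv i : ℝ) + 1 ≤ PS mv (n+1) := fun i => by
      exact_mod_cast le_PS mv i _ (by omega)
    have hlast : ((Fin.last n : Fin (n+1)) : ℕ) = n := rfl
    refine inv_anti₀ (prod_pos fun i _ => by positivity) ?_
    calc ∏ i, ((mv i : ℝ) + 1) ^ (1 + 1/((n:ℝ)+1))
        = (∏ i, ((mv i : ℝ) + 1)) * ∏ i, ((mv i : ℝ) + 1) ^ (1/((n:ℝ)+1)) := by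
          rw [← prod_mul_distrib]
          refine prod_congr rfl fun i _ => ?_
          rw [Real.rpow_add (by positivity), Real.rpow_one]
      _ ≤ (∏ i : Fin (n+1), (PS mv (i+1) : ℝ)) * ∏ i : Fin (n+1), (PS mv (n+1) : ℝ) ^ (1/((n:ℝ)+1)) := by
          gcongr with i _ i _
          · exact hpos i
          · exact hpos' i
      _ = ∏ i : Fin (n+1), ((PS mv (i+1) : ℝ) * if i = Fin.last n then (PS mv (i+1) : ℝ) else 1) := by
          rw [prod_mul_distrib, prod_ite_eq', if_pos (mem_univ _), hlast]
          congr 1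
          rw [prod_const, card_univ, Fintype.card_fin, ← Real.rpow_natCast, ← Real.rpow_mul (by positivity)]
          push_cast
          rw [one_div_mul_cancel (by positivity), Real.rpow_one]
      _ ≤ _ := by
          refine prod_le_prod (fun i _ => by positivity) fun i _ => ?_
          have hp1 : (1:ℝ) ≤ PS mv (i+1) := by
            have := hpos i
            have : (0:ℝ) ≤ mv i := by positivity
            linarith [hpos i]
          rw [zero_add]
          split_ifs with hi
          · rw [← pow_two]
            exact pow_le_pow_right₀ hp1 (h2 i (by rw [hi]; simp))
          · rw [mul_one]
            exact le_self_pow₀ hp1 (by have := h1 i; omega)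

lemma Tr_tendsto (n : ℕ) : Filter.Tendsto (fun M => Tr n M) Filter.atTop Filter.atTop := by
  apply Filter.tendsto_atTop_finset_of_monotone
  · intro M M' h mv hmv
    rw [mem_Tr] at hmv ⊢
    exact hmv.trans h
  · intro mv
    exact ⟨_, (mem_Tr mv).2 le_rfl⟩

lemma wJ_lim (n d m : ℕ) (J : Finset (Fin (n+1))) :
    Filter.Tendsto (fun M => (wJ M (n+1) d 0 J).coeff m) Filter.atTop
      (nhds (S (n+1) (d+n+2) m J)) := by
  simp only [wJ, Polynomial.finsetSum_coeff, S]
  rw [show d + (n+1) + 1 = d+n+2 by ring]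
  apply tendsto_finsetSum
  intro kv hkv
  have hs := (term_summable n _ _ kv hkv).indicator {mv | ∑ j ∈ J, (mv j + 1) = m}
  have h1 := hs.hasSum.comp (Tr_tendsto (n+1))
  have h2 := tsum_subtype {mv : Fin (n+1) → ℕ | ∑ j ∈ J, (mv j + 1) = m} (fun mv => term 0 kv mv)
  rw [← h2] at h1
  convert h1 using 2
  · rename_i M
    simp only [Function.comp, Nat.sub_zero]
    refine sum_congr rfl fun mv _ => ?_
    rw [Polynomial.coeff_C_mul, Polynomial.coeff_X_pow, Set.indicator_apply]
    simp [eq_comm]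
  · simp only [term, zero_add]
    rfl

theorem alternating_sum_S (n k m : ℕ) (hn : 1 ≤ n) (hk : n + 1 ≤ k) (hm : 1 ≤ m) :
    ∑ J ∈ (Finset.univ : Finset (Fin n)).powerset.filter Finset.Nonempty,
      (-1 : ℝ) ^ (J.card - 1) * S n k m J = 1 / (m : ℝ) ^ k := by
  obtain ⟨n, rfl⟩ : ∃ n', n = n' + 1 := ⟨n - 1, by omega⟩
  obtain ⟨d, rfl⟩ : ∃ d, k = d + n + 2 := ⟨k - n - 2, by omega⟩
  refine tendsto_nhds_unique ?_ (Ps_lim n d m hm)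
  rw [powerset_univ, sum_filter]
  simp only [Ps, Polynomial.finsetSum_coeff]
  apply tendsto_finsetSum
  intro J _
  split_ifs with hJ
  · have : ∀ M, ((-1 : Polynomial ℝ) ^ (J.card - 1) * wJ M (n+1) d 0 J).coeff m =
        (-1 : ℝ) ^ (J.card - 1) * (wJ M (n+1) d 0 J).coeff m := by
      intro M
      rw [← Polynomial.coeff_C_mul]; simp
    simp only [this]
    exact (wJ_lim n d m J).const_mul _
  · simp
end

section
/- Let n, k be positive integers with k ≥ n+1. Then the sum formula for multiple zeta-values holds: Σ_{𝐤∈I(k,1)} ζ(k₁,…,kₙ) = ζ(k), where ζ(k₁,…,kₙ) = Σ_{m₁,…,mₙ=1}^∞ 1/(m₁^{k₁} (m₁+m₂)^{k₂} ⋯ (m₁+⋯+mₙ)^{kₙ}) and ζ(k) = Σ_{m=1}^∞ 1/m^k. -/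
open Finset

open Filter Topology ENNReal

namespace SumF

/-- The connector. -/
noncomputable def C (x : ℝ) (a b : ℕ) : ℝ :=
  (∏ f ∈ range a, ((f : ℝ) + 1 - x)) * (∏ f ∈ range b, ((f : ℝ) + 1 - x)) /
    ∏ f ∈ range (a + b), ((f : ℝ) + 1 - x)

lemma fpos {x : ℝ} (hx : x < 1) (f : ℕ) : 0 < (f : ℝ) + 1 - x := by
  have : (0 : ℝ) ≤ f := Nat.cast_nonneg f
  linarith

lemma ppos {x : ℝ} (hx : x < 1) (a : ℕ) : 0 < ∏ f ∈ range a, ((f : ℝ) + 1 - x) :=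
  Finset.prod_pos fun f _ => fpos hx f

lemma C_pos {x : ℝ} (hx : x < 1) (a b : ℕ) : 0 < C x a b :=
  div_pos (mul_pos (ppos hx a) (ppos hx b)) (ppos hx _)

lemma C_symm (x : ℝ) (a b : ℕ) : C x a b = C x b a := by
  unfold C
  rw [add_comm a b, mul_comm]

lemma C_zero {x : ℝ} (hx : x < 1) (a : ℕ) : C x a 0 = 1 := by
  unfold C
  have := (ppos hx a).ne'
  simp [this]

lemma C_succ {x : ℝ} (hx : x < 1) (a b : ℕ) :
    C x a (b + 1) = C x a b * (((b : ℝ) + 1 - x) / ((a : ℝ) + b + 1 - x)) := by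
  unfold C
  have h1 := (ppos hx (a + b)).ne'
  have h2 := (fpos hx (a + b)).ne'
  push_cast at h2
  rw [← add_assoc, Finset.prod_range_succ, Finset.prod_range_succ _ (a + b)]
  push_cast
  field_simp

lemma C_le_one {x : ℝ} (hx : x < 1) (a b : ℕ) : C x a b ≤ 1 := by
  induction b with
  | zero => rw [C_zero hx]
  | succ b ih =>
    rw [C_succ hx]
    have h2 := fpos hx (a + b)
    push_cast at h2
    have h3 : ((b : ℝ) + 1 - x) / ((a : ℝ) + b + 1 - x) ≤ 1 := by
      rw [div_le_one h2]
      have : (0 : ℝ) ≤ a := Nat.cast_nonneg a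
      linarith
    exact mul_le_one₀ ih (div_pos (fpos hx b) h2).le h3

lemma C_tendsto {x : ℝ} (hx : x < 1) (b : ℕ) :
    Tendsto (fun a : ℕ => C x a (b + 1)) atTop (𝓝 0) := by
  have h : Tendsto (fun a : ℕ => ((b : ℝ) + 1 - x) / ((a : ℝ) + b + 1 - x)) atTop (𝓝 0) := by
    apply Tendsto.div_atTop tendsto_const_nhds
    have := tendsto_atTop_add_const_right atTop ((b : ℝ) + 1 - x) tendsto_natCast_atTop_atTop
    refine this.congr fun a => ?_
    ring
  refine squeeze_zero (fun a => (C_pos hx a _).le) (fun a => ?_) h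
  rw [C_succ hx]
  have h2 := fpos hx (a + b)
  push_cast at h2
  exact mul_le_of_le_one_left (div_pos (fpos hx b) h2).le (C_le_one hx a b)

lemma C_diff {x : ℝ} (hx : x < 1) (a b : ℕ) :
    ((a : ℝ) + 1 - x)⁻¹ * C x (a + 1) (b + 1) =
      ((b : ℝ) + 1)⁻¹ * (C x a (b + 1) - C x (a + 1) (b + 1)) := by
  rw [C_symm x (a + 1), C_succ hx, C_symm x a]
  have h2 := (fpos hx (b + 1 + a)).ne'
  have h3 := (fpos hx a).ne'
  have h4 : (b : ℝ) + 1 ≠ 0 := by positivity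
  push_cast at h2 ⊢
  field_simp
  ring

lemma step {x : ℝ} (hx : x < 1) (m b : ℕ) :
    ∑' j : ℕ, ENNReal.ofReal (((m + j : ℕ) : ℝ) + 1 - x)⁻¹ *
        ENNReal.ofReal (C x (m + j + 1) (b + 1))
      = ENNReal.ofReal ((b : ℝ) + 1)⁻¹ * ENNReal.ofReal (C x m (b + 1)) := by
  have hnn : ∀ j : ℕ, 0 ≤ (((m + j : ℕ) : ℝ) + 1 - x)⁻¹ * C x (m + j + 1) (b + 1) := fun j =>
    mul_nonneg (inv_nonneg.2 (fpos hx _).le) (C_pos hx _ _).le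
  have hs : HasSum (fun j : ℕ => (((m + j : ℕ) : ℝ) + 1 - x)⁻¹ * C x (m + j + 1) (b + 1))
      (((b : ℝ) + 1)⁻¹ * C x m (b + 1)) := by
    rw [hasSum_iff_tendsto_nat_of_nonneg hnn]
    have h1 : ∀ N : ℕ, ∑ j ∈ range N, (((m + j : ℕ) : ℝ) + 1 - x)⁻¹ * C x (m + j + 1) (b + 1)
        = ((b : ℝ) + 1)⁻¹ * (C x m (b + 1) - C x (m + N) (b + 1)) := by
      intro N
      rw [Finset.sum_congr rfl fun j _ => C_diff hx (m + j) b, ← Finset.mul_sum]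
      congr 1
      exact Finset.sum_range_sub' (fun j => C x (m + j) (b + 1)) N
    simp_rw [h1]
    have h2 : Tendsto (fun N => C x (m + N) (b + 1)) atTop (𝓝 0) :=
      (C_tendsto hx b).comp (tendsto_add_atTop_nat m |>.congr fun a => add_comm a m)
    simpa using (tendsto_const_nhds.sub h2).const_mul (((b : ℝ) + 1)⁻¹)
  rw [← ENNReal.ofReal_mul (by positivity), ← hs.tsum_eq,
    ENNReal.ofReal_tsum_of_nonneg hnn hs.summable]
  exact tsum_congr fun j => (ENNReal.ofReal_mul (inv_nonneg.2 (fpos hx _).le)).symm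

lemma PS_snoc_lt {N : ℕ} (p : Fin N → ℕ) (a : ℕ) (j : ℕ) (hj : j ≤ N) :
    PS (Fin.snoc p a : Fin (N + 1) → ℕ) j = PS p j := by
  unfold PS
  rw [Finset.sum_filter, Finset.sum_filter, Fin.sum_univ_castSucc]
  simp [hj]

lemma PS_snoc_last {N : ℕ} (p : Fin N → ℕ) (a : ℕ) :
    PS (Fin.snoc p a : Fin (N + 1) → ℕ) (N + 1) = PS p N + a + 1 := by
  unfold PS
  rw [Finset.sum_filter, Finset.sum_filter, Fin.sum_univ_castSucc]
  simp only [Fin.snoc_castSucc, Fin.snoc_last, Fin.val_castSucc, Fin.val_last]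
  rw [if_pos (by omega)]
  have : ∀ i : Fin N, ((i : ℕ) < N + 1 ↔ (i : ℕ) < N) := fun i => by omega
  simp [this]
  ring

lemma tsum_snoc {N : ℕ} (F : (Fin (N + 1) → ℕ) → ℝ≥0∞) :
    ∑' mv, F mv = ∑' p : Fin N → ℕ, ∑' a : ℕ, F (Fin.snoc p a) := by
  rw [← (Fin.snocEquiv (fun _ : Fin (N + 1) => ℕ)).tsum_eq, 
    ← (Equiv.prodComm (Fin N → ℕ) ℕ).tsum_eq, ENNReal.tsum_prod']
  rfl

/-- `1/(m-x)`. -/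
noncomputable def g (x : ℝ) (m : ℕ) : ℝ≥0∞ := ENNReal.ofReal ((m : ℝ) - x)⁻¹

lemma chain {x : ℝ} (hx : x < 1) (b : ℕ) (N : ℕ) :
    ∑' mv : Fin N → ℕ, (∏ i : Fin N, g x (PS mv ((i : ℕ) + 1))) *
        ENNReal.ofReal (C x (PS mv N) (b + 1))
      = ENNReal.ofReal ((b : ℝ) + 1)⁻¹ ^ N := by
  induction N with
  | zero =>
    have : C x 0 (b + 1) = 1 := by rw [C_symm, C_zero hx]
    simp [PS, this]
  | succ N ih =>
    rw [tsum_snoc, pow_succ, ← ih, ← ENNReal.tsum_mul_right]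
    refine tsum_congr fun p => ?_
    rw [mul_assoc, mul_comm (ENNReal.ofReal (C _ _ _)), ← step hx, ← ENNReal.tsum_mul_left]
    refine tsum_congr fun a => ?_
    rw [Fin.prod_univ_castSucc]
    simp only [Fin.val_castSucc, Fin.val_last]
    rw [PS_snoc_last, mul_assoc]
    congr 1
    · refine Finset.prod_congr rfl fun i _ => ?_
      rw [PS_snoc_lt _ _ _ (by omega)]
    · congr 1
      unfold g
      push_cast
      rfl

/-- generating function identity -/
lemma gen {x : ℝ} (hx : x < 1) (N : ℕ) :
    ∑' mv : Fin (N + 1) → ℕ, (∏ i : Fin (N + 1), g x (PS mv ((i : ℕ) + 1))) *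
        ((PS mv (N + 1) : ℕ) : ℝ≥0∞)⁻¹
      = ∑' b : ℕ, g x (b + 1) * (((b + 1 : ℕ) : ℝ≥0∞)⁻¹) ^ (N + 1) := by
  have hcast : ∀ b : ℕ, ENNReal.ofReal ((b : ℝ) + 1)⁻¹ = ((b + 1 : ℕ) : ℝ≥0∞)⁻¹ := by
    intro b
    rw [ENNReal.ofReal_inv_of_pos (by positivity)]
    congr 1
    rw [← Nat.cast_succ, ENNReal.ofReal_natCast]
  have h1 : ∀ m : ℕ, ((m + 1 : ℕ) : ℝ≥0∞)⁻¹ =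
      ∑' b : ℕ, g x (b + 1) * ENNReal.ofReal (C x (m + 1) (b + 1)) := by
    intro m
    have := step hx 0 m
    rw [C_symm x 0, C_zero hx, ENNReal.ofReal_one, mul_one, hcast] at this
    rw [← this]
    refine tsum_congr fun b => ?_
    rw [C_symm x (m + 1)]
    simp [g]
  have h2 : ∀ mv : Fin (N + 1) → ℕ, ∃ m, PS mv (N + 1) = m + 1 := by
    intro mv
    refine ⟨PS (Fin.init mv) N + mv (Fin.last N), ?_⟩
    conv_lhs => rw [← Fin.snoc_init_self mv]
    exact PS_snoc_last _ _
  have h3 : ∀ mv : Fin (N + 1) → ℕ, ((PS mv (N + 1) : ℕ) : ℝ≥0∞)⁻¹ =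
      ∑' b : ℕ, g x (b + 1) * ENNReal.ofReal (C x (PS mv (N + 1)) (b + 1)) := by
    intro mv
    obtain ⟨m, hm⟩ := h2 mv
    rw [hm, h1]
  simp_rw [h3, ← ENNReal.tsum_mul_left]
  rw [ENNReal.tsum_comm]
  refine tsum_congr fun b => ?_
  rw [← hcast, ← chain hx b (N + 1), ← ENNReal.tsum_mul_left]
  exact tsum_congr fun mv => by ring

lemma g_eq {x : ℝ} (h0 : 0 ≤ x) (hx : x < 1) (m : ℕ) (hm : 1 ≤ m) :
    g x m = ∑' e : ℕ, ENNReal.ofReal x ^ e * ((m : ℝ≥0∞)⁻¹) ^ (e + 1) := by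
  have hm' : (1 : ℝ) ≤ m := by exact_mod_cast hm
  have hm0 : (0 : ℝ) < m := by linarith
  have hmi : (m : ℝ≥0∞)⁻¹ = ENNReal.ofReal ((m : ℝ)⁻¹) := by
    rw [ENNReal.ofReal_inv_of_pos hm0, ENNReal.ofReal_natCast]
  have hr : x / m < 1 := by rw [div_lt_one hm0]; linarith
  have hs := (hasSum_geometric_of_lt_one (by positivity) hr).mul_left ((m : ℝ)⁻¹)
  unfold g
  have : ((m : ℝ) - x)⁻¹ = (m : ℝ)⁻¹ * (1 - x / m)⁻¹ := by
    rw [← mul_inv]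
    congr 1
    field_simp
  rw [this, ← hs.tsum_eq, ENNReal.ofReal_tsum_of_nonneg (fun e => by positivity) hs.summable]
  refine tsum_congr fun e => ?_
  rw [hmi, ← ENNReal.ofReal_pow h0, ← ENNReal.ofReal_pow (by positivity),
    ← ENNReal.ofReal_mul (by positivity)]
  congr 1
  rw [div_pow, pow_succ, inv_pow]
  field_simp

lemma prod_tsum {N : ℕ} (f : Fin N → ℕ → ℝ≥0∞) :
    ∏ i, ∑' e, f i e = ∑' e : Fin N → ℕ, ∏ i, f i (e i) := by
  induction N with
  | zero => simp
  | succ N ih =>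
    rw [tsum_snoc, Fin.prod_univ_castSucc, ih, ← ENNReal.tsum_mul_right]
    refine tsum_congr fun p => ?_
    rw [← ENNReal.tsum_mul_left]
    refine tsum_congr fun a => ?_
    rw [Fin.prod_univ_castSucc]
    simp

lemma tsum_grade {N : ℕ} (F : (Fin N → ℕ) → ℝ≥0∞) :
    ∑' e, F e = ∑' d : ℕ, ∑ e ∈ Finset.piAntidiag (univ : Finset (Fin N)) d, F e := by
  rw [← (Equiv.sigmaFiberEquiv (fun e : Fin N → ℕ => ∑ i, e i)).tsum_eq, ENNReal.tsum_sigma']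
  refine tsum_congr fun d => ?_
  rw [← Finset.tsum_subtype]
  have he : ∀ e : Fin N → ℕ, ∑ i, e i = d ↔ e ∈ Finset.piAntidiag (univ : Finset (Fin N)) d := by
    intro e
    simp [Finset.mem_piAntidiag]
  exact (Equiv.subtypeEquivRight he).tsum_eq
    (fun e : {e // e ∈ Finset.piAntidiag (univ : Finset (Fin N)) d} => F e)

lemma coeff_zero_le (a b : ℕ → ℝ≥0∞)
    (h : ∀ x : ℝ, 0 < x → x ≤ 1 / 2 →
      ∑' d, ENNReal.ofReal x ^ d * a d = ∑' d, ENNReal.ofReal x ^ d * b d)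
    (hf : ∑' d, ENNReal.ofReal (1 / 2) ^ d * b d ≠ ∞) : a 0 ≤ b 0 := by
  set K := ∑' d, ENNReal.ofReal (1 / 2) ^ d * b (d + 1) with hK
  have hKf : K ≠ ∞ := by
    rw [tsum_eq_zero_add' ENNReal.summable] at hf
    intro hK'
    apply hf
    simp_rw [pow_succ', mul_assoc]
    rw [ENNReal.tsum_mul_left, ← hK, hK', ENNReal.mul_top (by simp)]
    simp
  have hle : ∀ x : ℝ, 0 < x → x ≤ 1 / 2 → a 0 ≤ b 0 + ENNReal.ofReal x * K := by
    intro x h0 h1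
    calc a 0 = ENNReal.ofReal x ^ 0 * a 0 := by simp
      _ ≤ ∑' d, ENNReal.ofReal x ^ d * a d := ENNReal.le_tsum 0
      _ = _ := h x h0 h1
      _ ≤ _ := by
        rw [tsum_eq_zero_add' ENNReal.summable]
        simp_rw [pow_succ', mul_assoc]
        rw [ENNReal.tsum_mul_left, hK]
        simp only [pow_zero, one_mul]
        gcongr
  have ht : Tendsto (fun x : ℝ => b 0 + ENNReal.ofReal x * K) (𝓝[>] 0) (𝓝 (b 0 + 0 * K)) := by
    refine Tendsto.const_add _ (ENNReal.Tendsto.mul_const ?_ (Or.inr hKf))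
    have : Tendsto ENNReal.ofReal (𝓝 0) (𝓝 (ENNReal.ofReal 0)) :=
      ENNReal.continuous_ofReal.tendsto 0
    rw [ENNReal.ofReal_zero] at this
    exact this.mono_left nhdsWithin_le_nhds
  have := ge_of_tendsto ht (b := a 0) (by
    filter_upwards [Ioc_mem_nhdsGT (show (0 : ℝ) < 1 / 2 by norm_num)] with x hx
    exact hle x hx.1 hx.2)
  simpa using this

lemma coeff_eq (d : ℕ) : ∀ (a b : ℕ → ℝ≥0∞)
    (_ : ∀ x : ℝ, 0 < x → x ≤ 1 / 2 →
      ∑' d, ENNReal.ofReal x ^ d * a d = ∑' d, ENNReal.ofReal x ^ d * b d)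
    (_ : ∑' d, ENNReal.ofReal (1 / 2) ^ d * b d ≠ ∞), a d = b d := by
  have h0 : ∀ (a b : ℕ → ℝ≥0∞)
    (_ : ∀ x : ℝ, 0 < x → x ≤ 1 / 2 →
      ∑' d, ENNReal.ofReal x ^ d * a d = ∑' d, ENNReal.ofReal x ^ d * b d)
    (_ : ∑' d, ENNReal.ofReal (1 / 2) ^ d * b d ≠ ∞), a 0 = b 0 := by
    intro a b h hf
    refine le_antisymm (coeff_zero_le a b h hf)
      (coeff_zero_le b a (fun x hx hx' => (h x hx hx').symm) ?_)
    rwa [h _ (by norm_num) le_rfl]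
  induction d with
  | zero => exact h0
  | succ d ih =>
    intro a b h hf
    have hb0 : b 0 ≠ ∞ := by
      refine ne_top_of_le_ne_top hf ?_
      simpa using ENNReal.le_tsum (f := fun d => ENNReal.ofReal (1 / 2) ^ d * b d) 0
    have hab := h0 a b h hf
    refine ih (fun d => a (d + 1)) (fun d => b (d + 1)) ?_ ?_
    · intro x hx hx'
      have := h x hx hx'
      rw [tsum_eq_zero_add' ENNReal.summable, tsum_eq_zero_add' (f := fun d => _ * b d)
        ENNReal.summable] at this
      simp_rw [pow_succ', mul_assoc] at this
      rw [ENNReal.tsum_mul_left, ENNReal.tsum_mul_left, hab] at this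
      simp only [pow_zero, one_mul] at this
      rw [ENNReal.add_right_inj hb0] at this
      rwa [ENNReal.mul_right_inj (by simpa using hx) (by simp)] at this
    · intro hK'
      apply hf
      rw [tsum_eq_zero_add' ENNReal.summable]
      simp_rw [pow_succ', mul_assoc]
      rw [ENNReal.tsum_mul_left, hK', ENNReal.mul_top (by simp)]
      simp

lemma PS_pos {N : ℕ} (mv : Fin N → ℕ) (i : Fin N) : 1 ≤ PS mv ((i : ℕ) + 1) := by
  unfold PS
  have : mv i + 1 ≤ ∑ i ∈ Finset.univ.filter (fun j : Fin N => (j : ℕ) < (i : ℕ) + 1), (mv i + 1) :=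
    Finset.single_le_sum (f := fun i => mv i + 1) (fun _ _ => Nat.zero_le _) (by simp)
  omega

/-- ENNReal valued MZV -/
noncomputable def Z {n : ℕ} (kv : Fin n → ℕ) : ℝ≥0∞ :=
  ∑' mv : Fin n → ℕ, ∏ i : Fin n, (((PS mv ((i : ℕ) + 1) : ℕ) : ℝ≥0∞)⁻¹) ^ kv i

lemma lhs_gen {x : ℝ} (h0 : 0 ≤ x) (hx : x < 1) (N : ℕ) :
    ∑' mv : Fin (N + 1) → ℕ, (∏ i : Fin (N + 1), g x (PS mv ((i : ℕ) + 1))) *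
        ((PS mv (N + 1) : ℕ) : ℝ≥0∞)⁻¹
    = ∑' d : ℕ, ENNReal.ofReal x ^ d * ∑ kv ∈ Ikr (N + 1) (d + (N + 2)) 1, Z kv := by
  have h1 : ∀ mv : Fin (N + 1) → ℕ, (∏ i : Fin (N + 1), g x (PS mv ((i : ℕ) + 1))) *
        ((PS mv (N + 1) : ℕ) : ℝ≥0∞)⁻¹ = ∑' e : Fin (N + 1) → ℕ, ENNReal.ofReal x ^ (∑ i, e i) *
        ∏ i : Fin (N + 1), (((PS mv ((i : ℕ) + 1) : ℕ) : ℝ≥0∞)⁻¹) ^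
          (e i + 1 + if i = Fin.last N then 1 else 0) := by
    intro mv
    rw [Finset.prod_congr rfl fun i _ => g_eq h0 hx _ (PS_pos mv i), prod_tsum,
      ← ENNReal.tsum_mul_right]
    refine tsum_congr fun e => ?_
    rw [Finset.prod_mul_distrib, Finset.prod_pow_eq_pow_sum, mul_assoc]
    congr 1
    simp_rw [pow_add _ (_ + 1)]
    rw [Finset.prod_mul_distrib]
    congr 1
    rw [Finset.prod_eq_single (Fin.last N)]
    · simp
    · intro i _ hi
      simp [hi]
    · simp
  simp_rw [h1]
  rw [ENNReal.tsum_comm]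
  simp_rw [ENNReal.tsum_mul_left]
  rw [tsum_grade]
  refine tsum_congr fun d => ?_
  rw [Finset.mul_sum]
  refine Finset.sum_bij' (fun e _ => fun i => e i + 1 + if i = Fin.last N then 1 else 0)
    (fun kv _ => fun i => kv i - 1 - if i = Fin.last N then 1 else 0) ?_ ?_ ?_ ?_ ?_
  · intro e he
    have he' : ∑ i, e i = d := by simpa using he
    have hsum : ∑ i : Fin (N + 1), (e i + 1 + if i = Fin.last N then 1 else 0) = d + (N + 2) := by
      rw [Finset.sum_add_distrib, Finset.sum_add_distrib, he']
      simp
      ring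
    unfold Ikr
    simp only [Finset.mem_filter, Fintype.mem_piFinset, Finset.mem_range]
    refine ⟨fun i => ?_, fun i => by omega, fun i hi => ?_, hsum, fun i hi => by omega⟩
    · have := Finset.single_le_sum (f := fun i : Fin (N + 1) =>
        (e i + 1 + if i = Fin.last N then 1 else 0)) (fun _ _ => Nat.zero_le _) (Finset.mem_univ i)
      rw [hsum] at this
      omega
    · have : i = Fin.last N := Fin.ext (by simpa using hi)
      simp [this]
  · intro kv hkv
    unfold Ikr at hkv
    simp only [Finset.mem_filter] at hkv
    obtain ⟨-, k1, k2, k3, -⟩ := hkv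
    have hsum : ∑ i : Fin (N + 1), ((kv i - 1 - if i = Fin.last N then 1 else 0) + 1 +
        if i = Fin.last N then 1 else 0) = d + (N + 2) := by
      rw [← k3]
      refine Finset.sum_congr rfl fun i _ => ?_
      have := k1 i
      have := k2 i
      split_ifs with hi
      · have := k2 i (by simp [hi])
        omega
      · omega
    rw [Finset.sum_add_distrib, Finset.sum_add_distrib] at hsum
    simp at hsum
    simp
    omega
  · intro e he
    funext i
    simp only
    omega
  · intro kv hkv
    unfold Ikr at hkv
    simp only [Finset.mem_filter] at hkv
    obtain ⟨-, k1, k2, k3, -⟩ := hkv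
    funext i
    have := k1 i
    simp only
    split_ifs with hi
    · have := k2 i (by simp [hi])
      omega
    · omega
  · intro e he
    have he' : ∑ i, e i = d := by simpa using he
    rw [he']
    rfl

lemma rhs_gen {x : ℝ} (h0 : 0 ≤ x) (hx : x < 1) (N : ℕ) :
    ∑' b : ℕ, g x (b + 1) * (((b + 1 : ℕ) : ℝ≥0∞)⁻¹) ^ (N + 1)
    = ∑' d : ℕ, ENNReal.ofReal x ^ d * ∑' m : ℕ, (((m + 1 : ℕ) : ℝ≥0∞)⁻¹) ^ (d + (N + 2)) := by
  simp_rw [← ENNReal.tsum_mul_left]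
  rw [ENNReal.tsum_comm]
  refine tsum_congr fun b => ?_
  rw [g_eq h0 hx _ (by omega), ← ENNReal.tsum_mul_right]
  refine tsum_congr fun d => ?_
  rw [mul_assoc, ← pow_add]
  congr 2
  ring

lemma term_ofReal (m k : ℕ) : (((m + 1 : ℕ) : ℝ≥0∞)⁻¹) ^ k =
    ENNReal.ofReal ((((m + 1 : ℕ) : ℝ) ^ k)⁻¹) := by
  rw [ENNReal.ofReal_inv_of_pos (by positivity), ENNReal.ofReal_pow (by positivity),
    ENNReal.ofReal_natCast, ENNReal.inv_pow]

lemma zeta_summable (k : ℕ) (hk : 2 ≤ k) : Summable fun m : ℕ => (((m + 1 : ℕ) : ℝ) ^ k)⁻¹ :=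
  (summable_nat_add_iff 1 (f := fun m : ℕ => ((m : ℝ) ^ k)⁻¹)).2
    (Real.summable_nat_pow_inv.2 (by omega))

lemma zeta_ofReal (k : ℕ) (hk : 2 ≤ k) : ∑' m : ℕ, (((m + 1 : ℕ) : ℝ≥0∞)⁻¹) ^ k =
    ENNReal.ofReal (∑' m : ℕ, (((m + 1 : ℕ) : ℝ) ^ k)⁻¹) := by
  rw [ENNReal.ofReal_tsum_of_nonneg (fun m => by positivity) (zeta_summable k hk)]
  exact tsum_congr fun m => term_ofReal m k

lemma rhs_finite (N : ℕ) :
    ∑' d : ℕ, ENNReal.ofReal (1 / 2) ^ d * ∑' m : ℕ, (((m + 1 : ℕ) : ℝ≥0∞)⁻¹) ^ (d + (N + 2))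
      ≠ ∞ := by
  have hle : ∀ d : ℕ, ∑' m : ℕ, (((m + 1 : ℕ) : ℝ≥0∞)⁻¹) ^ (d + (N + 2)) ≤
      ∑' m : ℕ, (((m + 1 : ℕ) : ℝ≥0∞)⁻¹) ^ 2 := fun d =>
    ENNReal.tsum_le_tsum fun m => pow_le_pow_right_of_le_one' (by simp) (by omega)
  refine ne_top_of_le_ne_top ?_ (ENNReal.tsum_le_tsum fun d => mul_le_mul_right (hle d) _)
  rw [ENNReal.tsum_mul_right, zeta_ofReal 2 le_rfl]
  refine ENNReal.mul_ne_top ?_ ENNReal.ofReal_ne_top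
  rw [ENNReal.tsum_geometric]
  simp only [ne_eq, ENNReal.inv_eq_top, tsub_eq_zero_iff_le, not_le]
  rw [← ENNReal.ofReal_one]
  exact (ENNReal.ofReal_lt_ofReal_iff one_pos).2 (by norm_num)

lemma enn_sum_formula (N d : ℕ) : ∑ kv ∈ Ikr (N + 1) (d + (N + 2)) 1, Z kv =
    ∑' m : ℕ, (((m + 1 : ℕ) : ℝ≥0∞)⁻¹) ^ (d + (N + 2)) := by
  refine coeff_eq d (fun d => ∑ kv ∈ Ikr (N + 1) (d + (N + 2)) 1, Z kv)
    (fun d => ∑' m : ℕ, (((m + 1 : ℕ) : ℝ≥0∞)⁻¹) ^ (d + (N + 2))) ?_ (rhs_finite N)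
  intro x h0 h1
  have hx : x < 1 := by linarith
  rw [← lhs_gen h0.le hx, gen hx, rhs_gen h0.le hx]

lemma Z_toReal {n : ℕ} (kv : Fin n → ℕ) : (Z kv).toReal =
    ∑' mv : Fin n → ℕ, (∏ i : Fin n, ((PS mv ((i : ℕ) + 1) : ℕ) : ℝ) ^ kv i)⁻¹ := by
  unfold Z
  rw [ENNReal.tsum_toReal_eq]
  · refine tsum_congr fun mv => ?_
    rw [ENNReal.toReal_prod, ← Finset.prod_inv_distrib]
    refine Finset.prod_congr rfl fun i _ => ?_
    simp
  · intro mv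
    refine ENNReal.prod_ne_top fun i _ => ENNReal.pow_ne_top ?_
    have := PS_pos mv i
    simp only [ne_eq, ENNReal.inv_eq_top, Nat.cast_eq_zero]
    omega

end SumF

/-- The sum formula for multiple zeta-values: the sum of `ζ(𝐤)` over all admissible
indices `𝐤` of weight `k` and depth `n` equals `ζ(k)`. -/
theorem sum_formula_MZV (n k : ℕ) (hn : 1 ≤ n) (hk : n + 1 ≤ k) :
    ∑ kv ∈ Ikr n k 1,
      ∑' mv : Fin n → ℕ, (∏ i : Fin n, ((PS mv ((i : ℕ) + 1) : ℕ) : ℝ) ^ kv i)⁻¹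
    = ∑' m : ℕ, (((m + 1 : ℕ) : ℝ) ^ k)⁻¹ := by
  obtain ⟨N, rfl⟩ : ∃ N, n = N + 1 := ⟨n - 1, by omega⟩
  obtain ⟨d, rfl⟩ : ∃ d, k = d + (N + 2) := ⟨k - (N + 2), by omega⟩
  have h := SumF.enn_sum_formula N d
  rw [SumF.zeta_ofReal _ (by omega)] at h
  have hfin : ∀ kv ∈ Ikr (N + 1) (d + (N + 2)) 1, SumF.Z kv ≠ ⊤ := by
    have : ∑ kv ∈ Ikr (N + 1) (d + (N + 2)) 1, SumF.Z kv ≠ ⊤ := by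
      rw [h]; exact ENNReal.ofReal_ne_top
    exact fun kv hkv => ENNReal.sum_ne_top.1 this kv hkv
  have h' := congrArg ENNReal.toReal h
  rw [ENNReal.toReal_sum hfin, ENNReal.toReal_ofReal (tsum_nonneg fun m => by positivity)] at h'
  rw [← h']
  exact Finset.sum_congr rfl fun kv _ => (SumF.Z_toReal kv).symm
end

section
/- Let s, t be non-negative integers and let x₁,…,x_s, y₁,…,y_t be positive real numbers. When (z₁,…,z_{s+t}) runs over all shuffles of (x₁,…,x_s) and (y₁,…,y_t), i.e. arrangements of the s+t values into one sequence preserving the relative order of the x's and of the y's, one has Σ_{(z₁,…,z_{s+t})} 1/(z₁(z₁+z₂)⋯(z₁+⋯+z_{s+t})) = [1/(x₁(x₁+x₂)⋯(x₁+⋯+x_s))] · [1/(y₁(y₁+y₂)⋯(y₁+⋯+y_t))]. -/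
open Finset
open scoped Classical


/-- product of inverses of partial sums -/
noncomputable def shP {n : ℕ} (z : Fin n → ℝ) : ℝ := ∏ i : Fin n, (∑ j ∈ Finset.Iic i, z j)⁻¹

lemma shP_succ {n : ℕ} (z : Fin (n+1) → ℝ) :
    shP z = shP (fun i : Fin n => z i.castSucc) * (∑ j, z j)⁻¹ := by
  unfold shP
  rw [Fin.prod_univ_castSucc]
  congr 1
  · refine Finset.prod_congr rfl fun i _ => ?_
    have : Finset.Iic i.castSucc = (Finset.Iic i).map Fin.castSuccEmb := by
      ext j
      induction j using Fin.lastCases with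
      | last => simp [Fin.le_def]
      | cast j => simp
    rw [this, Finset.sum_map]
    rfl
  · congr 2
    ext j
    simp [Fin.le_last]

/-- the shuffle condition -/
def IsSh {n s t : ℕ} (σ : Fin n ≃ (Fin s ⊕ Fin t)) : Prop :=
  StrictMono (fun i : Fin s => σ.symm (Sum.inl i)) ∧
  StrictMono (fun i : Fin t => σ.symm (Sum.inr i))

/-- splitting off the last element of the left summand -/
def shE (s t : ℕ) : Option (Fin s ⊕ Fin t) ≃ (Fin (s+1) ⊕ Fin t) where
  toFun o := o.elim (Sum.inl (Fin.last s)) (Sum.map Fin.castSucc id)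
  invFun := Sum.elim (Fin.lastCases none (fun i => some (Sum.inl i))) (fun j => some (Sum.inr j))
  left_inv := by rintro (_ | _ | _) <;> simp
  right_inv := by
    rintro (i | j)
    · induction i using Fin.lastCases <;> simp
    · simp

/-- extend a shuffle by a last left element -/
def shExt {n s t : ℕ} (σ : Fin n ≃ (Fin s ⊕ Fin t)) : Fin (n+1) ≃ (Fin (s+1) ⊕ Fin t) :=
  finSuccEquivLast.trans ((Equiv.optionCongr σ).trans (shE s t))

lemma shExt_last {n s t : ℕ} (σ : Fin n ≃ (Fin s ⊕ Fin t)) :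
    shExt σ (Fin.last n) = Sum.inl (Fin.last s) := by
  simp [shExt, shE]

lemma shExt_castSucc {n s t : ℕ} (σ : Fin n ≃ (Fin s ⊕ Fin t)) (i : Fin n) :
    shExt σ i.castSucc = Sum.map Fin.castSucc id (σ i) := by
  simp [shExt, shE]

lemma shExt_symm_last {n s t : ℕ} (σ : Fin n ≃ (Fin s ⊕ Fin t)) :
    (shExt σ).symm (Sum.inl (Fin.last s)) = Fin.last n := by
  rw [Equiv.symm_apply_eq, shExt_last]

lemma shExt_symm_inl {n s t : ℕ} (σ : Fin n ≃ (Fin s ⊕ Fin t)) (i : Fin s) :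
    (shExt σ).symm (Sum.inl i.castSucc) = (σ.symm (Sum.inl i)).castSucc := by
  rw [Equiv.symm_apply_eq, shExt_castSucc]; simp

lemma shExt_symm_inr {n s t : ℕ} (σ : Fin n ≃ (Fin s ⊕ Fin t)) (i : Fin t) :
    (shExt σ).symm (Sum.inr i) = (σ.symm (Sum.inr i)).castSucc := by
  rw [Equiv.symm_apply_eq, shExt_castSucc]; simp

lemma isSh_shExt {n s t : ℕ} (σ : Fin n ≃ (Fin s ⊕ Fin t)) : IsSh (shExt σ) ↔ IsSh σ := by
  unfold IsSh
  refine and_congr ⟨fun h i j hij => ?_, fun h i j hij => ?_⟩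
    ⟨fun h i j hij => ?_, fun h i j hij => ?_⟩
  · have := h (Fin.castSucc_lt_castSucc_iff.2 hij)
    simpa [shExt_symm_inl] using this
  · induction j using Fin.lastCases with
    | last =>
      induction i using Fin.lastCases with
      | last => simp at hij
      | cast i => simp [shExt_symm_inl, shExt_symm_last, Fin.castSucc_lt_last]
    | cast j =>
      induction i using Fin.lastCases with
      | last => exact absurd hij (not_lt.2 (Fin.le_last _))
      | cast i =>
        have := h (Fin.castSucc_lt_castSucc_iff.1 hij)
        simpa [shExt_symm_inl] using this
  · simpa [shExt_symm_inr] using h hij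
  · simpa [shExt_symm_inr] using h hij

lemma shExt_inj {n s t : ℕ} : Function.Injective (shExt : (Fin n ≃ (Fin s ⊕ Fin t)) → _) := by
  intro σ τ h
  ext1 i
  have := congrArg (fun e => e i.castSucc) h
  simp only [shExt_castSucc] at this
  exact (Sum.map_injective.2 ⟨Fin.castSucc_injective _, Function.injective_id⟩) this

lemma shExt_surj {n s t : ℕ} (τ : Fin (n+1) ≃ (Fin (s+1) ⊕ Fin t))
    (h : τ (Fin.last n) = Sum.inl (Fin.last s)) : ∃ σ, shExt σ = τ := by
  let e := (finSuccEquivLast.symm.trans τ).trans (shE s t).symm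
  have he : e none = none := by
    simp [e, h, shE]
  refine ⟨Equiv.removeNone e, ?_⟩
  have : Equiv.optionCongr (Equiv.removeNone e) = e := by
    ext1 o
    cases o with
    | none => simp [he]
    | some a =>
      rw [Equiv.optionCongr_apply, Option.map_some]
      apply Equiv.removeNone_some
      rw [← Option.ne_none_iff_exists']
      intro hh
      exact absurd (e.injective (hh.trans he.symm)) (by simp)
  unfold shExt
  rw [this]
  ext1 i
  simp [e]

/-- the shuffle sum -/
noncomputable def shS (n : ℕ) {s t : ℕ} (x : Fin s → ℝ) (y : Fin t → ℝ) : ℝ :=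
  ∑ σ ∈ Finset.univ.filter (fun σ : Fin n ≃ (Fin s ⊕ Fin t) => IsSh σ),
    shP (fun i => Sum.elim x y (σ i))

lemma shA {n s t : ℕ} (x : Fin (s+1) → ℝ) (y : Fin t → ℝ) :
    ∑ τ ∈ Finset.univ.filter (fun τ : Fin (n+1) ≃ (Fin (s+1) ⊕ Fin t) =>
      IsSh τ ∧ τ (Fin.last n) = Sum.inl (Fin.last s)), shP (fun i => Sum.elim x y (τ i))
    = shS n (fun i => x i.castSucc) y * (∑ i, x i + ∑ j, y j)⁻¹ := by
  unfold shS
  rw [Finset.sum_mul]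
  symm
  refine Finset.sum_bij (fun σ _ => shExt σ) ?_ ?_ ?_ ?_
  · intro σ h
    simp only [Finset.mem_filter, Finset.mem_univ, true_and] at h ⊢
    exact ⟨(isSh_shExt σ).2 h, shExt_last σ⟩
  · intro _ _ _ _ h
    exact shExt_inj h
  · intro τ h
    simp only [Finset.mem_filter, Finset.mem_univ, true_and] at h
    obtain ⟨σ, rfl⟩ := shExt_surj τ h.2
    exact ⟨σ, by simpa using (isSh_shExt σ).1 h.1, rfl⟩
  · intro σ _
    rw [shP_succ, Equiv.sum_comp (shExt σ) (Sum.elim x y), Fintype.sum_sum_type]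
    simp only [Sum.elim_inl, Sum.elim_inr]
    congr 2
    funext i
    rw [shExt_castSucc]
    cases σ i <;> simp

lemma sum_swap {n s t : ℕ} (x : Fin s → ℝ) (y : Fin t → ℝ) (p : Fin s ⊕ Fin t → Prop) (k : Fin n → Prop) :
    ∑ τ ∈ Finset.univ.filter (fun τ : Fin n ≃ (Fin s ⊕ Fin t) =>
      IsSh τ ∧ ∀ i, k i → p (τ i)), shP (fun i => Sum.elim x y (τ i)) =
    ∑ τ ∈ Finset.univ.filter (fun τ : Fin n ≃ (Fin t ⊕ Fin s) =>
      IsSh τ ∧ ∀ i, k i → p (τ i).swap), shP (fun i => Sum.elim y x (τ i)) := by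
  refine Finset.sum_bij' (fun σ _ => σ.trans (Equiv.sumComm _ _))
    (fun σ _ => σ.trans (Equiv.sumComm _ _)) ?_ ?_ ?_ ?_ ?_
  · intro σ h
    simp only [Finset.mem_filter, Finset.mem_univ, true_and] at h ⊢
    exact ⟨⟨h.1.2, h.1.1⟩, by simpa using h.2⟩
  · intro σ h
    simp only [Finset.mem_filter, Finset.mem_univ, true_and] at h ⊢
    exact ⟨⟨h.1.2, h.1.1⟩, by simpa using h.2⟩
  · intro σ _; ext1 i; simp
  · intro σ _; ext1 i; simp
  · intro σ _
    congr 1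
    funext i
    simp only [Equiv.trans_apply, Equiv.sumComm_apply]
    cases σ i <;> simp

lemma shS_swap {n s t : ℕ} (x : Fin s → ℝ) (y : Fin t → ℝ) : shS n x y = shS n y x := by
  have := sum_swap (n := n) x y (fun _ => True) (fun _ => True)
  simpa [shS] using this

lemma shB {n s t : ℕ} (x : Fin s → ℝ) (y : Fin (t+1) → ℝ) :
    ∑ τ ∈ Finset.univ.filter (fun τ : Fin (n+1) ≃ (Fin s ⊕ Fin (t+1)) =>
      IsSh τ ∧ τ (Fin.last n) = Sum.inr (Fin.last t)), shP (fun i => Sum.elim x y (τ i))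
    = shS n x (fun i => y i.castSucc) * (∑ i, x i + ∑ j, y j)⁻¹ := by
  have := sum_swap (n := n+1) x y (fun z => z = Sum.inr (Fin.last t)) (fun i => i = Fin.last n)
  simp only [forall_eq] at this
  rw [this, shS_swap, add_comm (∑ i, x i), ← shA]
  refine Finset.sum_congr ?_ fun _ _ => rfl
  ext τ
  simp only [Finset.mem_filter, Finset.mem_univ, true_and]
  refine and_congr_right fun _ => ?_
  cases τ (Fin.last n) <;> simp

lemma sh_last_inl {n s t : ℕ} {τ : Fin (n+1) ≃ (Fin s ⊕ Fin t)} (h : IsSh τ) {a : Fin s}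
    (ha : τ (Fin.last n) = Sum.inl a) (b : Fin s) : b ≤ a := by
  by_contra hb
  have := h.1 (not_le.1 hb)
  simp only [← ha, Equiv.symm_apply_apply] at this
  exact absurd this (not_lt.2 (Fin.le_last _))

lemma sh_last_inr {n s t : ℕ} {τ : Fin (n+1) ≃ (Fin s ⊕ Fin t)} (h : IsSh τ) {a : Fin t}
    (ha : τ (Fin.last n) = Sum.inr a) (b : Fin t) : b ≤ a := by
  by_contra hb
  have := h.2 (not_le.1 hb)
  simp only [← ha, Equiv.symm_apply_apply] at this
  exact absurd this (not_lt.2 (Fin.le_last _))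

lemma shS_succ {n s t : ℕ} (x : Fin (s+1) → ℝ) (y : Fin (t+1) → ℝ) :
    shS (n+1) x y = (shS n (fun i => x i.castSucc) y + shS n x (fun i => y i.castSucc)) *
      (∑ i, x i + ∑ j, y j)⁻¹ := by
  rw [add_mul, ← shA, ← shB, ← Finset.sum_union]
  · unfold shS
    refine Finset.sum_congr ?_ fun _ _ => rfl
    ext τ
    simp only [Finset.mem_filter, Finset.mem_univ, true_and, Finset.mem_union, ← and_or_left]
    refine ⟨fun h => ⟨h, ?_⟩, fun h => h.1⟩
    cases ha : τ (Fin.last n) with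
    | inl a => left; rw [le_antisymm (Fin.le_last a) (sh_last_inl h ha _)]
    | inr a => right; rw [le_antisymm (Fin.le_last a) (sh_last_inr h ha _)]
  · rw [Finset.disjoint_left]
    intro τ h1 h2
    simp only [Finset.mem_filter, Finset.mem_univ, true_and] at h1 h2
    have := h1.2.symm.trans h2.2
    simp at this

lemma shS_zero {n s : ℕ} (x : Fin (s+1) → ℝ) (y : Fin 0 → ℝ) :
    shS (n+1) x y = shS n (fun i => x i.castSucc) y * (∑ i, x i)⁻¹ := by
  have := shA (n := n) x y
  rw [Finset.univ_eq_empty (α := Fin 0), Finset.sum_empty, add_zero] at this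
  rw [← this]
  unfold shS
  refine Finset.sum_congr ?_ fun _ _ => rfl
  ext τ
  simp only [Finset.mem_filter, Finset.mem_univ, true_and]
  refine ⟨fun h => ⟨h, ?_⟩, fun h => h.1⟩
  cases ha : τ (Fin.last n) with
  | inl a => rw [le_antisymm (Fin.le_last a) (sh_last_inl h ha _)]
  | inr a => exact a.elim0

lemma sh_main (n : ℕ) : ∀ (s t : ℕ) (x : Fin s → ℝ) (y : Fin t → ℝ)
    (_ : ∀ i, 0 < x i) (_ : ∀ i, 0 < y i) (_ : n = s + t), shS n x y = shP x * shP y := by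
  induction n with
  | zero =>
    intro s t x y _ _ h
    obtain rfl : s = 0 := by omega
    obtain rfl : t = 0 := by omega
    have : ∀ σ : Fin 0 ≃ (Fin 0 ⊕ Fin 0), IsSh σ :=
      fun σ => ⟨fun i => i.elim0, fun i => i.elim0⟩
    simp [shS, shP, this, Finset.card_univ, Fintype.card_equiv (Equiv.equivOfIsEmpty (Fin 0) (Fin 0 ⊕ Fin 0))]
  | succ n ih =>
    intro s t x y hx hy h
    match s, t with
    | 0, 0 => omega
    | s+1, 0 =>
      rw [shS_zero, ih s 0 _ _ (fun i => hx _) hy (by omega), shP_succ x]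
      ring
    | 0, t+1 =>
      rw [shS_swap, shS_zero, ih t 0 _ _ (fun i => hy _) hx (by omega), shP_succ y]
      ring
    | s+1, t+1 =>
      rw [shS_succ, ih s (t+1) _ _ (fun i => hx _) hy (by omega),
        ih (s+1) t _ _ hx (fun i => hy _) (by omega), shP_succ x, shP_succ y]
      have h1 : 0 < ∑ i, x i := Finset.sum_pos (fun i _ => hx i) Finset.univ_nonempty
      have h2 : 0 < ∑ i, y i := Finset.sum_pos (fun i _ => hy i) Finset.univ_nonempty
      have h3 := (add_pos h1 h2).ne'
      field_simp

/-- The shuffle summation formula (Lemma 2.2 of the paper): shuffles of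
`(x₁,…,x_s)` and `(y₁,…,y_t)` are parametrized by equivalences
`σ : Fin (s+t) ≃ Fin s ⊕ Fin t` whose inverse is strictly monotone on each summand;
the shuffled sequence is `z_i = Sum.elim x y (σ i)`. -/
theorem shuffle_sum (s t : ℕ) (x : Fin s → ℝ) (y : Fin t → ℝ)
    (hx : ∀ i, 0 < x i) (hy : ∀ i, 0 < y i) :
    ∑ σ ∈ Finset.univ.filter (fun σ : Fin (s + t) ≃ (Fin s ⊕ Fin t) =>
        StrictMono (fun i : Fin s => σ.symm (Sum.inl i)) ∧
        StrictMono (fun i : Fin t => σ.symm (Sum.inr i))),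
      ∏ i : Fin (s + t), (∑ j ∈ Finset.Iic i, Sum.elim x y (σ j))⁻¹
    = (∏ i : Fin s, (∑ j ∈ Finset.Iic i, x j)⁻¹) *
      (∏ i : Fin t, (∑ j ∈ Finset.Iic i, y j)⁻¹) := by
  have h := sh_main (s + t) s t x y hx hy rfl
  unfold shS shP IsSh at h
  convert h
end

section
/- Let n, k, m be positive integers with k ≥ n+1, let 1 ≤ l ≤ n, and let 𝐩 = (p_l,…,p_{n−1}) ∈ ℕ≥1^{n−l}. Then for every t with l ≤ t ≤ n−1, Σ_{r=l}^{t} B_{l,r}(𝐩) Σ_{𝐤∈I(k,r)} C_{l,r}(𝐩,𝐤) = B_{l,t}(𝐩) Σ_{𝐤∈I(k,t)} (1/m^{k_t}) C_{l,t+1}(𝐩,𝐤). -/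
open Finset

/-- `kval n kv j` is `k_j`, the `j`-th (1-indexed) component of the tuple encoded by
`kv : Fin n → ℕ`. -/
def kval (n : ℕ) (kv : Fin n → ℕ) (j : ℕ) : ℕ :=
  if h : j - 1 < n then kv ⟨j - 1, h⟩ else 0

/-- `Bf n l r p = B_{l,r}(𝐩) = 1/(p_l(p_l+p_{l+1})⋯(p_l+⋯+p_{r-1}))`, where
`p : Fin (n-l) → ℕ` encodes the positive integers `(p_l,…,p_{n-1})` via
`p_{l+i} = p i + 1`, so that `p_l + ⋯ + p_{l+j-1} = PS p j`. -/
noncomputable def Bf (n l r : ℕ) (p : Fin (n - l) → ℕ) : ℝ :=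
  ∏ j ∈ Finset.Icc 1 (r - l), ((PS p j : ℕ) : ℝ)⁻¹

/-- `Cf n m l r p kv = C_{l,r}(𝐩,𝐤) = 1/((m+p_l+⋯+p_{r-1})^{k_r}⋯(m+p_l+⋯+p_{n-1})^{k_n})`. -/
noncomputable def Cf (n m l r : ℕ) (p : Fin (n - l) → ℕ) (kv : Fin n → ℕ) : ℝ :=
  ∏ j ∈ Finset.Icc r n, (((m + PS p (j - l) : ℕ) : ℝ) ^ kval n kv j)⁻¹

/-- `Af m l = A_l = ∑_{(p₁,…,p_{l-1}), p₁+⋯+p_{l-1}<m} 1/(p₁(p₁+p₂)⋯(p₁+⋯+p_{l-1}))`. -/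
noncomputable def Af (m l : ℕ) : ℝ :=
  ∑ q ∈ (Fintype.piFinset fun _ : Fin (l - 1) => Finset.range m).filter
      (fun q => (∑ i, (q i + 1)) < m),
    ∏ j ∈ Finset.Icc 1 (l - 1), ((PS q j : ℕ) : ℝ)⁻¹

theorem mem_Ikr_iff (n k r : ℕ) (kv : Fin n → ℕ) : kv ∈ Ikr n k r ↔
    (∀ i, 1 ≤ kv i) ∧ (∀ i : Fin n, (i : ℕ) = n - 1 → 2 ≤ kv i) ∧
      (∑ i, kv i) = k ∧ ∀ i : Fin n, (i : ℕ) + 2 ≤ r → kv i = 1 := by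
  unfold Ikr
  rw [Finset.mem_filter, and_iff_right_iff_imp]
  rintro ⟨-, -, h, -⟩
  rw [Fintype.mem_piFinset]
  intro i
  rw [Finset.mem_range, Nat.lt_succ_iff, ← h]
  exact Finset.single_le_sum (f := kv) (fun _ _ => Nat.zero_le _) (Finset.mem_univ i)

theorem sum_eq_two {n : ℕ} (f g : Fin n → ℕ) (a b : Fin n) (hab : a ≠ b)
    (h : ∀ i, i ≠ a → i ≠ b → f i = g i) (h2 : f a + f b = g a + g b) :
    ∑ i, f i = ∑ i, g i := by
  have key : ∀ f : Fin n → ℕ, ∑ i, f i = f a + f b + ∑ i ∈ (univ.erase a).erase b, f i := by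
    intro f
    rw [← Finset.add_sum_erase _ f (Finset.mem_univ a),
      ← Finset.add_sum_erase (univ.erase a) f (a := b) (by simp [hab.symm]), add_assoc]
  rw [key f, key g, h2]
  congr 1
  apply Finset.sum_congr rfl
  intro i hi
  simp only [Finset.mem_erase, Finset.mem_univ, and_true] at hi
  exact h i hi.2 hi.1

theorem tele_geom (x y P : ℝ) (hx : x ≠ 0) (hy : y ≠ 0) (h : y = x + P) (c : ℕ) :
    P * ∑ a ∈ Finset.Icc 1 c, (x ^ a)⁻¹ * (y ^ (c + 1 - a))⁻¹ = (x ^ c)⁻¹ - (y ^ c)⁻¹ := by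
  induction c with
  | zero => simp
  | succ c ih =>
    rw [Finset.sum_Icc_succ_top (by omega)]
    have : ∑ a ∈ Finset.Icc 1 c, (x ^ a)⁻¹ * (y ^ (c + 1 + 1 - a))⁻¹
        = y⁻¹ * ∑ a ∈ Finset.Icc 1 c, (x ^ a)⁻¹ * (y ^ (c + 1 - a))⁻¹ := by
      rw [Finset.mul_sum]
      apply Finset.sum_congr rfl
      intro a ha
      rw [Finset.mem_Icc] at ha
      rw [show c + 1 + 1 - a = (c + 1 - a) + 1 by omega, pow_succ, mul_inv]
      ring
    rw [this, mul_add, mul_left_comm, ih, show c + 1 + 1 - (c + 1) = 1 by omega]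
    have hP : P = y - x := by rw [h]; ring
    rw [hP]
    field_simp
    ring

theorem PS_pos {N : ℕ} (p : Fin N → ℕ) (j : ℕ) (hj : 1 ≤ j) (hN : 1 ≤ N) : 0 < PS p j := by
  unfold PS
  apply Finset.sum_pos
  · intros; omega
  · exact ⟨⟨0, hN⟩, by simp; omega⟩

theorem Cf_succ (n m l r : ℕ) (p : Fin (n - l) → ℕ) (kv : Fin n → ℕ) (h : r ≤ n) :
    Cf n m l r p kv = (((m + PS p (r - l) : ℕ) : ℝ) ^ kval n kv r)⁻¹ * Cf n m l (r + 1) p kv := by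
  unfold Cf
  have e : Finset.Icc (r + 1) n = Finset.Ioc r n := by
    ext x
    simp only [Finset.mem_Icc, Finset.mem_Ioc]
    omega
  rw [e, ← Finset.mul_prod_Ioc_eq_prod_Icc h]

theorem Cf_congr (n m l r : ℕ) (p : Fin (n - l) → ℕ) (kv kw : Fin n → ℕ)
    (h : ∀ i : Fin n, r ≤ (i : ℕ) + 1 → kv i = kw i) :
    Cf n m l r p kv = Cf n m l r p kw := by
  unfold Cf
  apply Finset.prod_congr rfl
  intro j hj
  rw [Finset.mem_Icc] at hj
  congr 2
  unfold kval
  split_ifs with h1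
  · apply h
    simp only
    omega
  · rfl

/-- Splitting the tuple component at `t` from the one at `t+1`. -/
theorem sum_split (n k t : ℕ) (ht : 1 ≤ t) (htn : t + 1 ≤ n - 1) (F : (Fin n → ℕ) → ℝ)
    (i0 i1 : Fin n) (h0 : (i0 : ℕ) = t - 1) (h1 : (i1 : ℕ) = t) :
    ∑ kv ∈ Ikr n k t, F kv = ∑ kv ∈ Ikr n k (t + 1), ∑ a ∈ Finset.Icc 1 (kv i1),
      F (Function.update (Function.update kv i0 a) i1 (kv i1 + 1 - a)) := by
  have hne : i0 ≠ i1 := by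
    intro h
    rw [h] at h0
    omega
  rw [Finset.sum_sigma']
  symm
  refine Finset.sum_bij'
    (fun (x : Σ _ : Fin n → ℕ, ℕ) _ =>
      Function.update (Function.update x.1 i0 x.2) i1 (x.1 i1 + 1 - x.2))
    (fun kv _ => ⟨Function.update (Function.update kv i0 1) i1 (kv i0 + kv i1 - 1), kv i0⟩)
    ?_ ?_ ?_ ?_ ?_
  · rintro ⟨kv, a⟩ hx
    simp only [Finset.mem_sigma, Finset.mem_Icc, mem_Ikr_iff] at hx ⊢
    obtain ⟨⟨hp, hl, hs, hr⟩, ha⟩ := hx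
    have e0 : kv i0 = 1 := hr i0 (by omega)
    refine ⟨?_, ?_, ?_, ?_⟩
    · intro i
      have := hp i
      simp only [Function.update_apply]
      split_ifs <;> omega
    · intro i hi
      have := hl i hi
      have n0 : i ≠ i0 := by rintro rfl; omega
      have n1 : i ≠ i1 := by rintro rfl; omega
      simpa [Function.update_apply, n0, n1] using this
    · rw [← hs]
      apply sum_eq_two _ _ i0 i1 hne
      · intro i n0 n1
        simp [Function.update_apply, n0, n1]
      · simp [Function.update_apply, hne, e0]
        omega
    · intro i hi
      have n0 : i ≠ i0 := by rintro rfl; omega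
      have n1 : i ≠ i1 := by rintro rfl; omega
      simpa [Function.update_apply, n0, n1] using hr i (by omega)
  · intro kv hx
    simp only [Finset.mem_sigma, Finset.mem_Icc, mem_Ikr_iff] at hx ⊢
    obtain ⟨hp, hl, hs, hr⟩ := hx
    have p0 := hp i0
    have p1 := hp i1
    refine ⟨⟨?_, ?_, ?_, ?_⟩, p0, ?_⟩
    · intro i
      have := hp i
      simp only [Function.update_apply]
      split_ifs <;> omega
    · intro i hi
      have := hl i hi
      have n0 : i ≠ i0 := by rintro rfl; omega
      have n1 : i ≠ i1 := by rintro rfl; omega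
      simpa [Function.update_apply, n0, n1] using this
    · rw [← hs]
      apply sum_eq_two _ _ i0 i1 hne
      · intro i n0 n1
        simp [Function.update_apply, n0, n1]
      · simp [Function.update_apply, hne]
        omega
    · intro i hi
      have n1 : i ≠ i1 := by rintro rfl; omega
      by_cases n0 : i = i0
      · simp [Function.update_apply, n0, hne]
      · have : (i : ℕ) ≠ i0 := fun h => n0 (Fin.ext h)
        simpa [Function.update_apply, n0, n1] using hr i (by omega)
    · simp
      omega
  · rintro ⟨kv, a⟩ hx
    simp only [Finset.mem_sigma, Finset.mem_Icc, mem_Ikr_iff] at hx ⊢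
    obtain ⟨⟨hp, hl, hs, hr⟩, ha⟩ := hx
    have e0 : kv i0 = 1 := hr i0 (by omega)
    simp only [Sigma.mk.injEq]
    constructor
    · funext i
      simp only [Function.update_apply, hne, if_true, if_false]
      split_ifs with g1 g0
      · subst g1; omega
      · subst g0; omega
      · rfl
    · simp [Function.update_apply, hne]
  · intro kv hx
    simp only [mem_Ikr_iff] at hx
    obtain ⟨hp, hl, hs, hr⟩ := hx
    have p0 := hp i0
    have p1 := hp i1
    funext i
    simp only [Function.update_apply, if_true]
    split_ifs with g1 g0
    · subst g1; omega
    · subst g0; rfl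
    · rfl
  · intros
    rfl

theorem step_sum (n k m l t : ℕ) (hm : 1 ≤ m)
    (hl : 1 ≤ l) (hlt : l ≤ t) (htn : t + 1 ≤ n - 1) (p : Fin (n - l) → ℕ) :
    (PS p (t + 1 - l) : ℝ) * (∑ kv ∈ Ikr n k t,
        ((m : ℝ) ^ kval n kv t)⁻¹ * Cf n m l (t + 1) p kv)
      + ∑ kv ∈ Ikr n k (t + 1), Cf n m l (t + 1) p kv
    = ∑ kv ∈ Ikr n k (t + 1), ((m : ℝ) ^ kval n kv (t + 1))⁻¹ * Cf n m l (t + 1 + 1) p kv := by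
  have hi0 : t - 1 < n := by omega
  have hi1 : t < n := by omega
  have hne : (⟨t - 1, hi0⟩ : Fin n) ≠ ⟨t, hi1⟩ := by
    intro h
    rw [Fin.mk.injEq] at h
    omega
  rw [sum_split n k t (by omega) htn _ ⟨t - 1, hi0⟩ ⟨t, hi1⟩ rfl rfl, Finset.mul_sum,
    ← Finset.sum_add_distrib]
  apply Finset.sum_congr rfl
  intro kv hkv
  have k1 : ∀ kv : Fin n → ℕ, kval n kv (t + 1) = kv ⟨t, hi1⟩ := by
    intro kv
    simp [kval, hi1]
  have k0 : ∀ kv : Fin n → ℕ, kval n kv t = kv ⟨t - 1, hi0⟩ := by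
    intro kv
    simp [kval, hi0]
  have hm' : (m : ℝ) ≠ 0 := by
    have : m ≠ 0 := by omega
    exact_mod_cast this
  have hM' : ((m + PS p (t + 1 - l) : ℕ) : ℝ) ≠ 0 := by
    have : m + PS p (t + 1 - l) ≠ 0 := by omega
    exact_mod_cast this
  have T := tele_geom (m : ℝ) ((m + PS p (t + 1 - l) : ℕ) : ℝ) (PS p (t + 1 - l)) hm' hM'
    (by push_cast; rfl) (kv ⟨t, hi1⟩)
  have E : ∀ a ∈ Finset.Icc 1 (kv ⟨t, hi1⟩),
      ((m : ℝ) ^ kval n (Function.update (Function.update kv ⟨t - 1, hi0⟩ a) ⟨t, hi1⟩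
        (kv ⟨t, hi1⟩ + 1 - a)) t)⁻¹ * Cf n m l (t + 1) p
        (Function.update (Function.update kv ⟨t - 1, hi0⟩ a) ⟨t, hi1⟩ (kv ⟨t, hi1⟩ + 1 - a))
      = ((m : ℝ) ^ a)⁻¹ * (((m + PS p (t + 1 - l) : ℕ) : ℝ) ^ (kv ⟨t, hi1⟩ + 1 - a))⁻¹
        * Cf n m l (t + 1 + 1) p kv := by
    intro a _
    rw [Cf_succ n m l (t + 1) p _ (by omega), k0, k1, Function.update_self,
      Function.update_of_ne hne, Function.update_self, ← mul_assoc]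
    congr 1
    apply Cf_congr
    intro i hi
    have n0 : i ≠ ⟨t - 1, hi0⟩ := by rintro rfl; simp only at hi; omega
    have n1 : i ≠ ⟨t, hi1⟩ := by rintro rfl; simp only at hi; omega
    rw [Function.update_of_ne n1, Function.update_of_ne n0]
  rw [Finset.sum_congr rfl E, ← Finset.sum_mul, ← mul_assoc, T,
    Cf_succ n m l (t + 1) p kv (by omega), k1]
  ring

theorem Bf_step (n l t : ℕ) (hlt : l ≤ t) (htn : t + 1 ≤ n - 1) (p : Fin (n - l) → ℕ) :
    Bf n l t p = Bf n l (t + 1) p * (PS p (t + 1 - l) : ℝ) := by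
  have h : (PS p (t + 1 - l) : ℝ) ≠ 0 := by
    have := PS_pos p (t + 1 - l) (by omega) (by omega)
    exact_mod_cast this.ne'
  unfold Bf
  rw [show t + 1 - l = (t - l) + 1 by omega] at h ⊢
  rw [Finset.prod_Icc_succ_top (by omega), mul_assoc, inv_mul_cancel₀ h, mul_one]

/-- Lemma 3.1 of the paper: for `l ≤ t ≤ n-1`,
`∑_{r=l}^t B_{l,r}(𝐩) ∑_{𝐤∈I(k,r)} C_{l,r}(𝐩,𝐤)
  = B_{l,t}(𝐩) ∑_{𝐤∈I(k,t)} (1/m^{k_t}) C_{l,t+1}(𝐩,𝐤)`. -/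
theorem telescoping_BC (n k m l t : ℕ) (hn : 1 ≤ n) (hk : n + 1 ≤ k) (hm : 1 ≤ m)
    (hl : 1 ≤ l) (hlt : l ≤ t) (htn : t ≤ n - 1) (p : Fin (n - l) → ℕ) :
    ∑ r ∈ Finset.Icc l t, Bf n l r p * ∑ kv ∈ Ikr n k r, Cf n m l r p kv
    = Bf n l t p * ∑ kv ∈ Ikr n k t,
        ((m : ℝ) ^ kval n kv t)⁻¹ * Cf n m l (t + 1) p kv := by
  induction t, hlt using Nat.le_induction with
  | base =>
    rw [Finset.Icc_self, Finset.sum_singleton]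
    congr 1
    apply Finset.sum_congr rfl
    intro kv _
    rw [Cf_succ n m l l p kv (by omega)]
    simp [PS]
  | succ t hlt ih =>
    rw [Finset.sum_Icc_succ_top (by omega), ih (by omega), Bf_step n l t hlt htn p, mul_assoc,
      ← mul_add, step_sum n k m l t hm hl hlt htn p]
end

section
/- Let n, m be positive integers with n ≥ 2 and let 1 ≤ l ≤ n. Then Σ_{𝐩=(p_l,…,p_{n−1})∈ℕ≥1^{n−l}} B_{l,n−1}(𝐩) · (1/(p_l+⋯+p_{n−1}) − 1/(m+p_l+⋯+p_{n−1})) = Σ_{1≤q_l≤q_{l+1}≤⋯≤q_{n−1}≤m} 1/(q_l q_{l+1} ⋯ q_{n−1}), where both sides are interpreted as 1 when l = n. -/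
open Finset

lemma aux_PS_snoc_le {N : ℕ} (p : Fin N → ℕ) (a j : ℕ) (h : j ≤ N) :
    PS (Fin.snoc p a : Fin (N + 1) → ℕ) j = PS p j := by
  unfold PS
  rw [Finset.sum_filter, Finset.sum_filter, Fin.sum_univ_castSucc]
  simp [Nat.not_lt.mpr h]

lemma aux_PS_snoc_last {N : ℕ} (p : Fin N → ℕ) (a : ℕ) :
    PS (Fin.snoc p a : Fin (N + 1) → ℕ) (N + 1) = PS p N + a + 1 := by
  unfold PS
  rw [Finset.sum_filter, Finset.sum_filter, Fin.sum_univ_castSucc]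
  simp only [Fin.snoc_castSucc, Fin.snoc_last, Fin.val_castSucc, Fin.val_last, Fin.is_lt]
  have : ∀ x : Fin N, (x : ℕ) < N + 1 := fun x => by omega
  simp [this, add_assoc]

lemma aux_PS_pos {N : ℕ} (p : Fin (N + 1) → ℕ) : 0 < PS p (N + 1) := by
  unfold PS
  apply Finset.sum_pos
  · intros; omega
  · exact ⟨0, by simp⟩

lemma aux_step (c : ℕ) :
    HasSum (fun a : ℕ => ((c : ℝ) + a + 1)⁻¹ - ((c : ℝ) + a + 2)⁻¹) ((c : ℝ) + 1)⁻¹ := by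
  rw [hasSum_iff_tendsto_nat_of_nonneg]
  · have h : ∀ k : ℕ, ∑ a ∈ Finset.range k, (((c : ℝ) + a + 1)⁻¹ - ((c : ℝ) + a + 2)⁻¹)
        = ((c : ℝ) + 1)⁻¹ - ((k : ℝ) + ((c : ℝ) + 1))⁻¹ := by
      intro k
      induction k with
      | zero => simp
      | succ k ih =>
        rw [Finset.sum_range_succ, ih]
        push_cast
        rw [show (k : ℝ) + 1 + (c + 1) = c + k + 2 by ring,
          show (k : ℝ) + (c + 1) = c + k + 1 by ring]
        ring
    simp only [h]
    have h2 : Filter.Tendsto (fun k : ℕ => ((k : ℝ) + ((c : ℝ) + 1))⁻¹) Filter.atTop (nhds 0) :=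
      tendsto_inv_atTop_zero.comp
        (Filter.tendsto_atTop_add_const_right _ _ tendsto_natCast_atTop_atTop)
    simpa using h2.const_sub (((c : ℝ) + 1)⁻¹)
  · intro a
    rw [sub_nonneg]
    apply inv_anti₀ <;> first | positivity | linarith

lemma aux_tel (s m : ℕ) :
    HasSum (fun a : ℕ => (((s + a + 1 : ℕ) : ℝ))⁻¹ - ((m : ℝ) + ((s + a + 1 : ℕ) : ℝ))⁻¹)
      (∑ q ∈ Finset.range m, ((s : ℝ) + q + 1)⁻¹) := by
  induction m with
  | zero => simp
  | succ m ih =>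
    rw [Finset.sum_range_succ]
    have := ih.add (aux_step (s + m))
    push_cast at this ⊢
    convert this using 2 with a
    rw [show (m : ℝ) + 1 + (s + a + 1) = s + m + a + 2 by ring,
      show (m : ℝ) + (s + a + 1) = s + m + a + 1 by ring]
    ring

/-- Right-hand side. -/
noncomputable def auxG (N m : ℕ) : ℝ :=
  ∑ q ∈ (Fintype.piFinset fun _ : Fin N => Finset.range m).filter
        (fun q => ∀ i j : Fin N, i ≤ j → q i ≤ q j),
        ∏ i : Fin N, ((q i : ℝ) + 1)⁻¹

lemma auxG_zero (m : ℕ) : auxG 0 m = 1 := by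
  simp [auxG]

lemma auxG_succ (N m : ℕ) :
    auxG (N + 1) m = ∑ q ∈ Finset.range m, ((q : ℝ) + 1)⁻¹ * auxG N (q + 1) := by
  unfold auxG
  simp only [Finset.mul_sum]
  rw [Finset.sum_sigma']
  symm
  refine Finset.sum_bij' (fun x _ => (Fin.snoc x.2 x.1 : Fin (N + 1) → ℕ))
    (fun y _ => ⟨y (Fin.last N), Fin.init y⟩) ?_ ?_ ?_ ?_ ?_
  · rintro ⟨q, x⟩ h
    simp only [Finset.mem_sigma, Finset.mem_range, Finset.mem_filter, Fintype.mem_piFinset] at h ⊢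
    obtain ⟨h1, h2, h3⟩ := h
    constructor
    · intro i
      refine Fin.lastCases ?_ (fun i => ?_) i
      · simpa using h1
      · have := h2 i
        simp only [Fin.snoc_castSucc]
        omega
    · intro i j
      refine Fin.lastCases ?_ (fun j => ?_) j
      · intro _
        refine Fin.lastCases ?_ (fun i => ?_) i
        · simp
        · have := h2 i
          simp only [Fin.snoc_castSucc, Fin.snoc_last]
          omega
      · refine Fin.lastCases ?_ (fun i => ?_) i
        · intro hle
          exact absurd hle (by simp)
        · intro hle
          simp only [Fin.snoc_castSucc]
          exact h3 i j (by simpa using hle)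
  · intro y h
    simp only [Finset.mem_sigma, Finset.mem_range, Finset.mem_filter, Fintype.mem_piFinset] at h ⊢
    obtain ⟨h1, h2⟩ := h
    refine ⟨h1 _, fun i => ?_, fun i j hij => ?_⟩
    · exact Nat.lt_succ_of_le (h2 _ _ (Fin.le_last _))
    · exact h2 _ _ (by simpa using hij)
  · rintro ⟨q, x⟩ h
    simp
  · intro y h
    simp
  · rintro ⟨q, x⟩ h
    simp [Fin.prod_univ_castSucc, mul_comm]

/-- Left-hand term. -/
noncomputable def auxT (N m : ℕ) (p : Fin N → ℕ) : ℝ :=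
  (∏ j ∈ Finset.Icc 1 (N - 1), ((PS p j : ℕ) : ℝ)⁻¹) *
    (((PS p N : ℕ) : ℝ)⁻¹ - ((m : ℝ) + ((PS p N : ℕ) : ℝ))⁻¹)

lemma auxT_nonneg (N m : ℕ) (p : Fin (N + 1) → ℕ) : 0 ≤ auxT (N + 1) m p := by
  unfold auxT
  apply mul_nonneg
  · exact Finset.prod_nonneg fun _ _ => by positivity
  · have : (0 : ℝ) < (PS p (N + 1) : ℕ) := by exact_mod_cast aux_PS_pos p
    rw [sub_nonneg]
    apply inv_anti₀ this
    have : (0 : ℝ) ≤ m := by positivity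
    linarith

lemma auxT_snoc (N m : ℕ) (p : Fin N → ℕ) (a : ℕ) :
    auxT (N + 1) m (Fin.snoc p a) = (∏ j ∈ Finset.Icc 1 N, ((PS p j : ℕ) : ℝ)⁻¹) *
      ((((PS p N + a + 1 : ℕ) : ℝ))⁻¹ - ((m : ℝ) + ((PS p N + a + 1 : ℕ) : ℝ))⁻¹) := by
  unfold auxT
  rw [aux_PS_snoc_last]
  congr 1
  apply Finset.prod_congr (by simp)
  intro j hj
  rw [aux_PS_snoc_le]
  exact (Finset.mem_Icc.mp hj).2

lemma aux_fiber (N m : ℕ) (p : Fin N → ℕ) :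
    HasSum (fun a : ℕ => auxT (N + 1) m (Fin.snoc p a))
      ((∏ j ∈ Finset.Icc 1 N, ((PS p j : ℕ) : ℝ)⁻¹) *
        ∑ q ∈ Finset.range m, ((PS p N : ℝ) + q + 1)⁻¹) := by
  simp only [auxT_snoc]
  exact (aux_tel (PS p N) m).mul_left _

lemma aux_outer (N m : ℕ) (p : Fin (N + 1) → ℕ) :
    (∏ j ∈ Finset.Icc 1 (N + 1), ((PS p j : ℕ) : ℝ)⁻¹) *
        ∑ q ∈ Finset.range m, ((PS p (N + 1) : ℝ) + q + 1)⁻¹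
      = ∑ q ∈ Finset.range m, ((q : ℝ) + 1)⁻¹ * auxT (N + 1) (q + 1) p := by
  rw [Finset.prod_Icc_succ_top (by omega), Finset.mul_sum]
  apply Finset.sum_congr rfl
  intro q _
  unfold auxT
  have h : (0 : ℝ) < (PS p (N + 1) : ℕ) := by exact_mod_cast aux_PS_pos p
  simp only [Nat.add_sub_cancel]
  generalize (∏ j ∈ Finset.Icc 1 N, ((PS p j : ℕ) : ℝ)⁻¹) = P
  generalize ((PS p (N + 1) : ℕ) : ℝ) = s at *
  have hq : (0 : ℝ) < (q : ℝ) + 1 := by positivity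
  have h3 : s + (q : ℝ) + 1 ≠ 0 := by positivity
  have h4 : (q : ℝ) + 1 + s ≠ 0 := by positivity
  push_cast
  rw [show (q : ℝ) + 1 + s = s + q + 1 by ring]
  field_simp
  ring

lemma aux_snoc_hasSum (N m : ℕ) (c : ℝ)
    (h : HasSum (fun p : Fin N → ℕ => (∏ j ∈ Finset.Icc 1 N, ((PS p j : ℕ) : ℝ)⁻¹) *
        ∑ q ∈ Finset.range m, ((PS p N : ℝ) + q + 1)⁻¹) c) :
    HasSum (auxT (N + 1) m) c := by
  let e : (Fin N → ℕ) × ℕ ≃ (Fin (N + 1) → ℕ) :=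
    { toFun := fun x => Fin.snoc x.1 x.2
      invFun := fun y => (Fin.init y, y (Fin.last N))
      left_inv := fun x => by simp
      right_inv := fun y => by simp }
  rw [← e.hasSum_iff]
  have hs : Summable (auxT (N + 1) m ∘ e) := by
    have hnn : 0 ≤ auxT (N + 1) m ∘ e := fun x => auxT_nonneg N m (e x)
    rw [summable_prod_of_nonneg hnn]
    refine ⟨fun p => (aux_fiber N m p).summable, ?_⟩
    have : ∀ p : Fin N → ℕ, ∑' a : ℕ, (auxT (N + 1) m ∘ e) (p, a) = _ :=
      fun p => (aux_fiber N m p).tsum_eq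
    simp only [this]
    exact h.summable
  have h2 := hs.hasSum.prod_fiberwise (fun p => aux_fiber N m p)
  rw [h.unique h2]
  exact hs.hasSum

lemma aux_main (N : ℕ) : ∀ m : ℕ, HasSum (auxT (N + 1) m) (auxG (N + 1) m) := by
  induction N with
  | zero =>
    intro m
    apply aux_snoc_hasSum
    rw [auxG_succ]
    have : ∑ q ∈ Finset.range m, ((q : ℝ) + 1)⁻¹ * auxG 0 (q + 1)
        = (fun p : Fin 0 → ℕ => (∏ j ∈ Finset.Icc 1 0, ((PS p j : ℕ) : ℝ)⁻¹) *
        ∑ q ∈ Finset.range m, ((PS p 0 : ℝ) + q + 1)⁻¹) default := by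
      simp [auxG_zero, PS]
    rw [this]
    exact hasSum_unique _
  | succ N ih =>
    intro m
    apply aux_snoc_hasSum
    simp only [aux_outer]
    rw [auxG_succ]
    exact hasSum_sum fun q _ => (ih (q + 1)).mul_left _

/-- Equation (3.3) of the paper:
`∑_𝐩 B_{l,n-1}(𝐩)·(1/(p_l+⋯+p_{n-1}) - 1/(m+p_l+⋯+p_{n-1}))
  = ∑_{1≤q_l≤⋯≤q_{n-1}≤m} 1/(q_l⋯q_{n-1})`,
both sides being interpreted as `1` when `l = n`.  On the right the tuple
`(q_l,…,q_{n-1})` is encoded by `q : Fin (n-l) → ℕ` with `q_{l+i} = q i + 1`. -/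
theorem B_telescoped_sum (n m l : ℕ) (hn : 2 ≤ n) (hm : 1 ≤ m)
    (hl : 1 ≤ l) (hln : l ≤ n) :
    (if l = n then (1 : ℝ)
     else ∑' p : Fin (n - l) → ℕ,
       Bf n l (n - 1) p *
         (((PS p (n - l) : ℕ) : ℝ)⁻¹ - ((m : ℝ) + ((PS p (n - l) : ℕ) : ℝ))⁻¹))
    = ∑ q ∈ (Fintype.piFinset fun _ : Fin (n - l) => Finset.range m).filter
        (fun q => ∀ i j : Fin (n - l), i ≤ j → q i ≤ q j),
        ∏ i : Fin (n - l), ((q i : ℝ) + 1)⁻¹ := by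
  by_cases h : l = n
  · subst h
    rw [if_pos rfl]
    have : ∀ k, k = 0 → (1 : ℝ) = auxG k m := by
      rintro _ rfl
      exact (auxG_zero m).symm
    exact this _ (Nat.sub_self l)
  · rw [if_neg h]
    obtain ⟨N, hN⟩ : ∃ N, n - l = N + 1 := ⟨n - l - 1, by omega⟩
    have key : ∀ k, k = N + 1 → ∑' p : Fin k → ℕ, auxT k m p = auxG k m := by
      rintro _ rfl
      exact (aux_main N m).tsum_eq
    have e : n - 1 - l = n - l - 1 := by omega
    have := key _ hN
    unfold Bf
    rw [e]
    exact this
end
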